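/- For n ≥ 2k, the number of splits of the hypersimplex Δ(k,n) equals (k−1)(2^{n−1} − (n+1)) − Σ_{i=2}^{k−1} (k−i)·C(n,i). -/

import Mathlib

open scoped Classical

section Subdivision

variable {E : Type*} [AddCommGroup E] [Module ℝ E]

/-- A polytope: the convex hull of a finite set of points. -/
def IsPolytope (P : Set E) : Prop := ∃ s : Finset E, P = convexHull ℝ (s : Set E)

/-- `F` is a face of `C`: a convex extreme subset. -/
def IsFaceOf (F C : Set E) : Prop := IsExtreme ℝ C F ∧ Convex ℝ F

/-- A polytopal subdivision of a polytope `P`: a finite collection of nonempty polytopes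
(cells), closed under taking (nonempty) faces, covering `P`, such that any two cells meet
in a common (possibly empty) face, and such that all vertices of cells are vertices of `P`. -/
structure IsSubdivision (P : Set E) (S : Set (Set E)) : Prop where
  finite : S.Finite
  nonempty_cell : ∀ C ∈ S, C.Nonempty
  poly : ∀ C ∈ S, IsPolytope C
  face_closed : ∀ C ∈ S, ∀ F, IsFaceOf F C → F.Nonempty → F ∈ S
  cover : ⋃₀ S = P
  inter_face : ∀ C ∈ S, ∀ D ∈ S, IsFaceOf (C ∩ D) C
  vertices : ∀ C ∈ S, ∀ x ∈ Set.extremePoints ℝ C, x ∈ Set.extremePoints ℝ P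

/-- A maximal cell of a collection of cells. -/
def MaximalCell (S : Set (Set E)) (C : Set E) : Prop :=
  C ∈ S ∧ ∀ D ∈ S, C ⊆ D → D = C

/-- The (relative) boundary of a polytope: the union of its proper faces. -/
def relBoundary (P : Set E) : Set E := ⋃₀ {F | IsFaceOf F P ∧ F ≠ P}

/-- The restriction `Σ|_{P'} = {S ∩ P' : S ∈ Σ}` of a subdivision to a subpolytope. -/
def restrictSubdiv (S : Set (Set E)) (P' : Set E) : Set (Set E) := (fun C => C ∩ P') '' S

/-- `P'` is a subpolytope of `P`: the convex hull of a subset of the vertices of `P`. -/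
def IsSubpolytope (P' P : Set E) : Prop :=
  ∃ W : Set E, W ⊆ Set.extremePoints ℝ P ∧ P' = convexHull ℝ W

/-- The tight-spans of `(P, S)` and `(P', S')` are isomorphic as posets: there is a
bijection between the interior cells (those not contained in the boundary) which is an
isomorphism for the partial order by reverse inclusion. -/
def TightSpanIso (P : Set E) (S : Set (Set E)) (P' : Set E) (S' : Set (Set E)) : Prop :=
  ∃ e : {C : Set E // C ∈ S ∧ ¬ C ⊆ relBoundary P} ≃
        {C : Set E // C ∈ S' ∧ ¬ C ⊆ relBoundary P'},
    ∀ C D, C.1 ⊆ D.1 ↔ (e C).1 ⊆ (e D).1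

/-- `S'` coarsens `S`: every cell of `S` is contained in some cell of `S'`. -/
def Coarsens (S S' : Set (Set E)) : Prop := ∀ C ∈ S, ∃ D ∈ S', C ⊆ D

/-- The trivial subdivision of a polytope: its collection of nonempty faces. -/
def trivialSubdiv (P : Set E) : Set (Set E) := {F | IsFaceOf F P ∧ F.Nonempty}

/-- A coarsest (non-trivial) subdivision: a non-trivial subdivision whose only proper
coarsening is the trivial subdivision. -/
def IsCoarsest (P : Set E) (S : Set (Set E)) : Prop :=
  IsSubdivision P S ∧ S ≠ trivialSubdiv P ∧
    ∀ S', IsSubdivision P S' → Coarsens S S' → S' ≠ S → S' = trivialSubdiv P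

end Subdivision

/-- The 0/1 indicator vector of a subset of `[n]`. -/
noncomputable def indicatorVec {n : ℕ} (B : Set (Fin n)) : Fin n → ℝ :=
  fun i => if i ∈ B then 1 else 0

/-- The hypersimplex `Δ(k,n)`. -/
noncomputable def hypersimplex (k n : ℕ) : Set (Fin n → ℝ) :=
  convexHull ℝ {x | ∃ σ : Finset (Fin n), σ.card = k ∧ x = indicatorVec (↑σ : Set (Fin n))}

/-- A split of a polytope `P`: a polytopal subdivision with exactly two maximal cells. -/
def IsSplit {E : Type*} [AddCommGroup E] [Module ℝ E] (P : Set E) (S : Set (Set E)) : Prop :=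
  IsSubdivision P S ∧ {C | MaximalCell S C}.ncard = 2

section Faces

variable {E : Type*} [AddCommGroup E] [Module ℝ E]

theorem IsFaceOf.trans {C F G : Set E} (hF : IsFaceOf F C) (hG : IsFaceOf G F) : IsFaceOf G C :=
  ⟨hF.1.trans hG.1, hG.2⟩

/-- A face of the convex hull of `V` is the convex hull of the elements of `V` it contains. -/
theorem IsFaceOf.eq_convexHull {V F : Set E} (h : IsFaceOf F (convexHull ℝ V)) :
    F = convexHull ℝ (V ∩ F) := by
  refine subset_antisymm ?_ (convexHull_min Set.inter_subset_right h.2)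
  have key : convexHull ℝ V ⊆ {x | x ∈ convexHull ℝ V ∧ (x ∈ F → x ∈ convexHull ℝ (V ∩ F))} := by
    refine convexHull_min (fun v hv => ⟨subset_convexHull ℝ V hv,
      fun hF => subset_convexHull ℝ _ ⟨hv, hF⟩⟩) ?_
    rw [convex_iff_openSegment_subset]
    intro x hx y hy z hz
    refine ⟨(convex_convexHull ℝ V).openSegment_subset hx.1 hy.1 hz, fun hzF => ?_⟩
    exact (convex_convexHull ℝ _).openSegment_subset
      (hx.2 (h.1.left_mem_of_mem_openSegment hx.1 hy.1 hzF hz))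
      (hy.2 (h.1.right_mem_of_mem_openSegment hx.1 hy.1 hzF hz)) hz
  exact fun x hx => (key (h.1.subset hx)).2 hx

theorem IsFaceOf.isPolytope {C F : Set E} (hF : IsFaceOf F C) (hC : IsPolytope C) :
    IsPolytope F := by
  obtain ⟨s, rfl⟩ := hC
  refine ⟨s.filter (· ∈ F), ?_⟩
  rw [hF.eq_convexHull]
  congr 1
  ext x
  simp only [Set.mem_inter_iff, Finset.mem_coe, Finset.coe_filter, Set.mem_ofPred_eq,
    ← hF.eq_convexHull]

theorem IsPolytope.finite_faces {C : Set E} (hC : IsPolytope C) : {F | IsFaceOf F C}.Finite := by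
  obtain ⟨s, rfl⟩ := hC
  refine (s.finite_toSet.finite_subsets.image (convexHull ℝ)).subset fun F hF => ?_
  exact ⟨_, Set.inter_subset_left, (IsFaceOf.eq_convexHull hF).symm⟩

theorem IsPolytope.convex {C : Set E} (hC : IsPolytope C) : Convex ℝ C := by
  obtain ⟨s, rfl⟩ := hC
  exact convex_convexHull ℝ _

theorem IsPolytope.isFaceOf_refl {C : Set E} (hC : IsPolytope C) : IsFaceOf C C :=
  ⟨IsExtreme.rfl, hC.convex⟩

end Faces

section Polytopes

variable {E : Type*} [NormedAddCommGroup E] [NormedSpace ℝ E]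

theorem IsPolytope.isCompact {C : Set E} (hC : IsPolytope C) : IsCompact C := by
  obtain ⟨s, rfl⟩ := hC
  exact s.finite_toSet.isCompact_convexHull ℝ

theorem eq_convexHull_extremePoints {C : Set E} (hC : IsCompact C) (hconv : Convex ℝ C)
    (hfin : (Set.extremePoints ℝ C).Finite) : C = convexHull ℝ (Set.extremePoints ℝ C) := by
  conv_lhs => rw [← closure_convexHull_extremePoints hC hconv]
  exact (hfin.isClosed_convexHull ℝ).closure_eq

theorem IsPolytope.eq_convexHull_extremePoints {C : Set E} (hC : IsPolytope C) :
    C = convexHull ℝ (Set.extremePoints ℝ C) := by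
  refine _root_.eq_convexHull_extremePoints hC.isCompact hC.convex ?_
  obtain ⟨s, rfl⟩ := hC
  exact s.finite_toSet.subset extremePoints_convexHull_subset

end Polytopes

section Gluing

variable {E : Type*} [AddCommGroup E] [Module ℝ E]

/-- The nonempty faces of either of two sets. -/
def facesOfPair (C D : Set E) : Set (Set E) :=
  {F | F.Nonempty ∧ (IsFaceOf F C ∨ IsFaceOf F D)}

theorem facesOfPair_comm (C D : Set E) : facesOfPair C D = facesOfPair D C := by
  ext F
  simp only [facesOfPair, Set.mem_ofPred_eq, or_comm]

theorem isFaceOf_inter_of_isFaceOf {C D F G : Set E} (hCD : IsFaceOf (C ∩ D) C)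
    (hDC : IsFaceOf (C ∩ D) D) (hF : IsFaceOf F C) (hG : IsFaceOf G D) : IsFaceOf (F ∩ G) F := by
  have h1 : IsExtreme ℝ D (G ∩ (C ∩ D)) := hG.1.inter hDC.1
  have h2 : IsExtreme ℝ C (G ∩ (C ∩ D)) :=
    hCD.1.trans (h1.mono Set.inter_subset_right Set.inter_subset_right)
  have h3 : F ∩ G = F ∩ (G ∩ (C ∩ D)) := by
    ext x
    have := @hF.1.subset x
    have := @hG.1.subset x
    simp only [Set.mem_inter_iff]
    tauto
  refine ⟨?_, hF.2.inter hG.2⟩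
  rw [h3]
  exact (hF.1.inter h2).mono hF.1.subset Set.inter_subset_left

theorem isFaceOf_inter_of_isFaceOf_same {C F G : Set E} (hF : IsFaceOf F C)
    (hG : IsFaceOf G C) : IsFaceOf (F ∩ G) F :=
  ⟨(hF.1.inter hG.1).mono hF.1.subset Set.inter_subset_left, hF.2.inter hG.2⟩

theorem isSubdivision_facesOfPair {P C D : Set E} (hC : IsPolytope C) (hD : IsPolytope D)
    (hP : C ∪ D = P) (hCD : IsFaceOf (C ∩ D) C) (hDC : IsFaceOf (C ∩ D) D)
    (hvC : Set.extremePoints ℝ C ⊆ Set.extremePoints ℝ P)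
    (hvD : Set.extremePoints ℝ D ⊆ Set.extremePoints ℝ P) :
    IsSubdivision P (facesOfPair C D) where
  finite := (hC.finite_faces.union hD.finite_faces).subset fun _ h => h.2
  nonempty_cell := fun _ h => h.1
  poly := fun _ h => h.2.elim (fun h => h.isPolytope hC) fun h => h.isPolytope hD
  face_closed := fun _ h _ hF hne => ⟨hne, h.2.imp (fun h => h.trans hF) fun h => h.trans hF⟩
  cover := by
    subst hP
    refine subset_antisymm ?_ ?_
    · rintro x ⟨F, ⟨-, h⟩, hx⟩
      exact h.imp (fun h => h.1.subset hx) fun h => h.1.subset hx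
    · rintro x (hx | hx)
      · exact ⟨C, ⟨⟨x, hx⟩, Or.inl hC.isFaceOf_refl⟩, hx⟩
      · exact ⟨D, ⟨⟨x, hx⟩, Or.inr hD.isFaceOf_refl⟩, hx⟩
  inter_face := by
    rintro F ⟨-, hF | hF⟩ G ⟨-, hG | hG⟩
    · exact isFaceOf_inter_of_isFaceOf_same hF hG
    · exact isFaceOf_inter_of_isFaceOf hCD hDC hF hG
    · rw [Set.inter_comm C D] at hCD hDC
      exact isFaceOf_inter_of_isFaceOf hDC hCD hF hG
    · exact isFaceOf_inter_of_isFaceOf_same hF hG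
  vertices := fun _ h _ hx => h.2.elim
    (fun h => hvC (h.1.extremePoints_subset_extremePoints hx))
    fun h => hvD (h.1.extremePoints_subset_extremePoints hx)

theorem maximalCell_facesOfPair_left {C D : Set E} (hC : IsPolytope C) (hne : C.Nonempty)
    (hCD : ¬ C ⊆ D) : MaximalCell (facesOfPair C D) C :=
  ⟨⟨hne, Or.inl hC.isFaceOf_refl⟩, fun _ hF hCF => hF.2.elim
    (fun h => subset_antisymm h.1.subset hCF) fun h => absurd (hCF.trans h.1.subset) hCD⟩

theorem setOf_maximalCell_facesOfPair {C D : Set E} (hC : IsPolytope C) (hD : IsPolytope D)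
    (hCD : ¬ C ⊆ D) (hDC : ¬ D ⊆ C) : {F | MaximalCell (facesOfPair C D) F} = {C, D} := by
  have hCne : C.Nonempty := Set.nonempty_iff_ne_empty.2 fun h => hCD (h ▸ Set.empty_subset D)
  have hDne : D.Nonempty := Set.nonempty_iff_ne_empty.2 fun h => hDC (h ▸ Set.empty_subset C)
  have hCm := maximalCell_facesOfPair_left hC hCne hCD
  have hDm := maximalCell_facesOfPair_left hD hDne hDC
  rw [facesOfPair_comm] at hDm
  refine Set.Subset.antisymm (fun F hF => ?_) ?_
  · rcases hF.1.2 with h | h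
    · exact Or.inl (hF.2 C hCm.1 h.1.subset).symm
    · exact Or.inr (hF.2 D hDm.1 h.1.subset).symm
  · rintro F (rfl | rfl)
    exacts [hCm, hDm]

theorem isSplit_facesOfPair {P C D : Set E} (hC : IsPolytope C) (hD : IsPolytope D)
    (hP : C ∪ D = P) (hCD : IsFaceOf (C ∩ D) C) (hDC : IsFaceOf (C ∩ D) D)
    (hvC : Set.extremePoints ℝ C ⊆ Set.extremePoints ℝ P)
    (hvD : Set.extremePoints ℝ D ⊆ Set.extremePoints ℝ P)
    (hnCD : ¬ C ⊆ D) (hnDC : ¬ D ⊆ C) : IsSplit P (facesOfPair C D) := by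
  refine ⟨isSubdivision_facesOfPair hC hD hP hCD hDC hvC hvD, ?_⟩
  rw [setOf_maximalCell_facesOfPair hC hD hnCD hnDC]
  exact Set.ncard_pair fun h => hnCD h.subset

/-- A split is determined by its two maximal cells. -/
theorem IsSplit.exists_eq_facesOfPair {P : Set E} {S : Set (Set E)} (hS : IsSplit P S) :
    ∃ C D, C ∈ S ∧ D ∈ S ∧ ¬ C ⊆ D ∧ ¬ D ⊆ C ∧ C ∪ D = P ∧ S = facesOfPair C D := by
  obtain ⟨hS, hcard⟩ := hS
  obtain ⟨C, D, hne, hset⟩ := Set.ncard_eq_two.1 hcard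
  have hC : MaximalCell S C := by
    change C ∈ {F | MaximalCell S F}
    simp [hset]
  have hD : MaximalCell S D := by
    change D ∈ {F | MaximalCell S F}
    simp [hset]
  have hmax : ∀ F ∈ S, F ⊆ C ∨ F ⊆ D := by
    intro F hF
    obtain ⟨G, hFG, hG⟩ := hS.finite.exists_le_maximal hF
    have hGm : G ∈ {F | MaximalCell S F} :=
      ⟨hG.1, fun H hH hGH => subset_antisymm (hG.2 hH hGH) hGH⟩
    rw [hset] at hGm
    rcases hGm with rfl | rfl
    · exact Or.inl hFG
    · exact Or.inr hFG
  refine ⟨C, D, hC.1, hD.1, fun h => hne (hC.2 D hD.1 h).symm, fun h => hne (hD.2 C hC.1 h), ?_, ?_⟩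
  · rw [← hS.cover]
    refine subset_antisymm (Set.union_subset (Set.subset_sUnion_of_mem hC.1)
      (Set.subset_sUnion_of_mem hD.1)) (Set.sUnion_subset fun F hF => ?_)
    exact (hmax F hF).elim (fun h => h.trans Set.subset_union_left)
      fun h => h.trans Set.subset_union_right
  · ext F
    refine ⟨fun hF => ⟨hS.nonempty_cell F hF, ?_⟩, ?_⟩
    · refine (hmax F hF).imp (fun h => ?_) fun h => ?_
      · simpa [Set.inter_eq_right.2 h] using hS.inter_face C hC.1 F hF
      · simpa [Set.inter_eq_right.2 h] using hS.inter_face D hD.1 F hF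
    · rintro ⟨hne, h | h⟩
      exacts [hS.face_closed C hC.1 F h hne, hS.face_closed D hD.1 F h hne]

end Gluing

section Slab

variable {n : ℕ}

/-- The part of the hypersimplex `Δ(k,n)` on which the sum of the coordinates in `A` lies
between `l` and `h`. -/
def slab (k : ℕ) (A : Finset (Fin n)) (l h : ℕ) : Set (Fin n → ℝ) :=
  {x | (∀ i, 0 ≤ x i ∧ x i ≤ 1) ∧ ∑ i, x i = k ∧ l ≤ ∑ i ∈ A, x i ∧ ∑ i ∈ A, x i ≤ h}

theorem convex_slab (k : ℕ) (A : Finset (Fin n)) (l h : ℕ) : Convex ℝ (slab k A l h) := by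
  rintro x ⟨hx, hxk, hxl, hxh⟩ y ⟨hy, hyk, hyl, hyh⟩ a b ha hb hab
  have hsum : ∀ B : Finset (Fin n),
      ∑ i ∈ B, (a • x + b • y) i = a * ∑ i ∈ B, x i + b * ∑ i ∈ B, y i := fun B => by
    simp [Finset.sum_add_distrib, Finset.mul_sum]
  obtain rfl : b = 1 - a := by linarith
  refine ⟨fun i => ?_, ?_, ?_, ?_⟩
  · have h1 := hx i
    have h2 := hy i
    simp only [Pi.add_apply, Pi.smul_apply, smul_eq_mul]
    constructor <;> nlinarith
  · rw [hsum, hxk, hyk]; ring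
  · rw [hsum]; nlinarith
  · rw [hsum]; nlinarith

theorem isCompact_slab (k : ℕ) (A : Finset (Fin n)) (l h : ℕ) : IsCompact (slab k A l h) := by
  have hbox : IsCompact (Set.univ.pi fun _ : Fin n => Set.Icc (0 : ℝ) 1) :=
    isCompact_univ_pi fun _ => isCompact_Icc
  refine hbox.of_isClosed_subset ?_ fun x hx i _ => hx.1 i
  have hcont : ∀ B : Finset (Fin n), Continuous fun x : Fin n → ℝ => ∑ i ∈ B, x i :=
    fun B => by fun_prop
  have hset : slab k A l h = (⋂ i, {x : Fin n → ℝ | 0 ≤ x i} ∩ {x | x i ≤ 1}) ∩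
      ({x | ∑ i, x i = k} ∩ ({x | l ≤ ∑ i ∈ A, x i} ∩ {x | ∑ i ∈ A, x i ≤ h})) := by
    ext x
    simp [slab]
  rw [hset]
  refine (isClosed_iInter fun i => ?_).inter ((isClosed_eq (hcont _) continuous_const).inter
    ((isClosed_le continuous_const (hcont _)).inter (isClosed_le (hcont _) continuous_const)))
  exact (isClosed_le continuous_const (continuous_apply i)).inter
    (isClosed_le (continuous_apply i) continuous_const)

theorem sum_indicatorVec (σ B : Finset (Fin n)) :
    ∑ i ∈ B, indicatorVec (σ : Set (Fin n)) i = ((σ ∩ B).card : ℝ) := by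
  simp [indicatorVec, Finset.sum_ite_mem, Finset.inter_comm]

theorem indicatorVec_mem_slab {k : ℕ} {A σ : Finset (Fin n)} {l h : ℕ} :
    indicatorVec (σ : Set (Fin n)) ∈ slab k A l h ↔
      σ.card = k ∧ l ≤ (σ ∩ A).card ∧ (σ ∩ A).card ≤ h := by
  have h01 : ∀ i, 0 ≤ indicatorVec (σ : Set (Fin n)) i ∧ indicatorVec (σ : Set (Fin n)) i ≤ 1 := by
    intro i
    unfold indicatorVec
    split_ifs <;> norm_num
  simp only [slab, Set.mem_ofPred_eq, sum_indicatorVec, Finset.inter_univ, Nat.cast_inj,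
    Nat.cast_le]
  exact and_iff_right h01

theorem exists_eq_indicatorVec {k : ℕ} {x : Fin n → ℝ} (hx : ∀ i, x i = 0 ∨ x i = 1)
    (hk : ∑ i, x i = k) :
    ∃ σ : Finset (Fin n), σ.card = k ∧ x = indicatorVec (σ : Set (Fin n)) := by
  have hxσ : x = indicatorVec ((Finset.univ.filter fun i => x i = 1 : Finset (Fin n)) :
      Set (Fin n)) := by
    ext i
    rcases hx i with h | h <;> simp [indicatorVec, h]
  refine ⟨_, ?_, hxσ⟩
  rw [hxσ, sum_indicatorVec, Finset.inter_univ] at hk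
  exact_mod_cast hk

theorem notMem_extremePoints_slab {k : ℕ} {A : Finset (Fin n)} {l h : ℕ} {x : Fin n → ℝ}
    (hx : x ∈ slab k A l h) {i j : Fin n} (hij : i ≠ j) (hi : 0 < x i ∧ x i < 1)
    (hj : 0 < x j ∧ x j < 1)
    (hA : (i ∈ A ↔ j ∈ A) ∨ (l < ∑ i ∈ A, x i ∧ ∑ i ∈ A, x i < h)) :
    x ∉ Set.extremePoints ℝ (slab k A l h) := by
  set d : Fin n → ℝ := Pi.single i 1 - Pi.single j 1 with hd
  have hdsum : ∀ B : Finset (Fin n),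
      ∑ m ∈ B, d m = (if i ∈ B then 1 else 0) - (if j ∈ B then 1 else 0) := by
    intro B
    simp [hd, Finset.sum_sub_distrib]
  obtain ⟨ε, hε, h1, h2, h3, h4, h5⟩ : ∃ ε > 0, ε ≤ x i ∧ ε ≤ 1 - x i ∧ ε ≤ x j ∧ ε ≤ 1 - x j ∧
      ((i ∈ A ↔ j ∈ A) ∨ (ε ≤ ∑ i ∈ A, x i - l ∧ ε ≤ h - ∑ i ∈ A, x i)) := by
    set m := min (min (x i) (1 - x i)) (min (x j) (1 - x j)) with hm
    have hm0 : 0 < m := by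
      simp only [hm, lt_min_iff]
      refine ⟨⟨hi.1, ?_⟩, hj.1, ?_⟩ <;> linarith [hi.2, hj.2]
    have m1 : m ≤ x i := (min_le_left _ _).trans (min_le_left _ _)
    have m2 : m ≤ 1 - x i := (min_le_left _ _).trans (min_le_right _ _)
    have m3 : m ≤ x j := (min_le_right _ _).trans (min_le_left _ _)
    have m4 : m ≤ 1 - x j := (min_le_right _ _).trans (min_le_right _ _)
    rcases hA with hA | hA
    · exact ⟨m, hm0, m1, m2, m3, m4, Or.inl hA⟩
    · refine ⟨min m (min (∑ i ∈ A, x i - l) (h - ∑ i ∈ A, x i)), ?_, (min_le_left _ _).trans m1,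
        (min_le_left _ _).trans m2, (min_le_left _ _).trans m3, (min_le_left _ _).trans m4,
        Or.inr ⟨(min_le_right _ _).trans (min_le_left _ _),
          (min_le_right _ _).trans (min_le_right _ _)⟩⟩
      simp only [gt_iff_lt, lt_min_iff]
      exact ⟨hm0, by linarith [hA.1], by linarith [hA.2]⟩
  have hmem : ∀ t : ℝ, |t| ≤ ε → x + t • d ∈ slab k A l h := by
    intro t ht
    obtain ⟨ht1, ht2⟩ := abs_le.1 ht
    have hs : ∀ B : Finset (Fin n), ∑ m ∈ B, (x + t • d) m = ∑ m ∈ B, x m + t * ∑ m ∈ B, d m := by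
      intro B
      simp [Finset.sum_add_distrib, Finset.mul_sum]
    obtain ⟨hx1, hx2, hx3, hx4⟩ := hx
    refine ⟨fun m => ?_, ?_, ?_⟩
    · by_cases hmi : m = i
      · subst hmi
        simp only [hd, Pi.add_apply, Pi.smul_apply, Pi.sub_apply, Pi.single_eq_same,
          Pi.single_eq_of_ne hij, smul_eq_mul]
        constructor <;> linarith
      · by_cases hmj : m = j
        · subst hmj
          simp only [hd, Pi.add_apply, Pi.smul_apply, Pi.sub_apply, Pi.single_eq_same,
            Pi.single_eq_of_ne hmi, smul_eq_mul]
          constructor <;> linarith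
        · simpa [hd, hmi, hmj] using hx1 m
    · rw [hs, hdsum, hx2]
      simp
    · rw [hs, hdsum]
      rcases h5 with h5 | h5
      · simp only [h5, sub_self, mul_zero, add_zero]
        exact ⟨hx3, hx4⟩
      · split_ifs <;> constructor <;> linarith
  intro hext
  have hseg : x ∈ openSegment ℝ (x + ε • d) (x + (-ε) • d) := by
    refine ⟨1 / 2, 1 / 2, by norm_num, by norm_num, by norm_num, ?_⟩
    ext m
    simp
    ring
  have := congrFun (hext.2 (hmem ε (abs_of_pos hε).le) (hmem (-ε) (by rw [abs_neg, abs_of_pos hε]))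
    hseg) i
  simp [hd, hij] at this
  linarith

theorem exists_int_sum_eq {x : Fin n → ℝ} {B : Finset (Fin n)} {i : Fin n} (hi : i ∈ B)
    (h : ∀ j ∈ B, j ≠ i → x j = 0 ∨ x j = 1) : ∃ m : ℤ, ∑ j ∈ B, x j = m + x i := by
  refine ⟨((B.erase i).filter fun j => x j = 1).card, ?_⟩
  rw [← Finset.sum_erase_add B x hi]
  congr 1
  rw [Finset.card_filter]
  push_cast
  refine Finset.sum_congr rfl fun j hj => ?_
  rcases h j (Finset.mem_of_mem_erase hj) (Finset.ne_of_mem_erase hj) with h | h <;> simp [h]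

theorem intCast_add_ne_intCast {y : ℝ} (hy : 0 < y ∧ y < 1) (m m' : ℤ) : (m : ℝ) + y ≠ m' := by
  intro h
  have h1 : (m : ℝ) < m' := by linarith
  have h2 : (m' : ℝ) < m + 1 := by linarith
  norm_cast at h1 h2
  omega

theorem eq_zero_or_one_of_mem_extremePoints_slab {k : ℕ} {A : Finset (Fin n)} {l h : ℕ}
    {x : Fin n → ℝ} (hx : x ∈ Set.extremePoints ℝ (slab k A l h)) (i : Fin n) :
    x i = 0 ∨ x i = 1 := by
  by_contra! hi
  obtain ⟨hx1, hx2, hx3, hx4⟩ := hx.1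
  have hfrac : ∀ j, ¬ (x j = 0 ∨ x j = 1) → 0 < x j ∧ x j < 1 := by
    intro j hj
    rw [not_or] at hj
    exact ⟨lt_of_le_of_ne (hx1 j).1 (Ne.symm hj.1), lt_of_le_of_ne (hx1 j).2 hj.2⟩
  have hi' := hfrac i (by tauto)
  have hside : ∀ j, (i ∈ A ↔ j ∈ A) → j ≠ i → x j = 0 ∨ x j = 1 := by
    intro j hj hji
    by_contra hcon
    exact notMem_extremePoints_slab hx.1 hji.symm hi' (hfrac j hcon) (Or.inl hj) hx
  have hnint : ∀ m : ℤ, ∑ j ∈ A, x j ≠ m := by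
    intro m hm
    by_cases hiA : i ∈ A
    · obtain ⟨m', hm'⟩ := exists_int_sum_eq hiA fun j hj => hside j (by tauto)
      exact intCast_add_ne_intCast hi' m' m (by linarith)
    · obtain ⟨m', hm'⟩ := exists_int_sum_eq (Finset.mem_compl.2 hiA)
        fun j hj => hside j (by have := Finset.mem_compl.1 hj; tauto)
      have := Finset.sum_add_sum_compl A x
      exact intCast_add_ne_intCast hi' m' (k - m) (by push_cast; linarith)
  obtain ⟨j, hji, hj⟩ : ∃ j, j ≠ i ∧ ¬ (x j = 0 ∨ x j = 1) := by
    by_contra! hcon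
    obtain ⟨m', hm'⟩ := exists_int_sum_eq (Finset.mem_univ i) (x := x)
      fun j _ hj => (by have := hcon j hj; tauto)
    exact intCast_add_ne_intCast hi' m' k (by push_cast; linarith)
  refine notMem_extremePoints_slab hx.1 hji.symm hi' (hfrac j hj) (Or.inr ⟨?_, ?_⟩) hx
  · exact lt_of_le_of_ne hx3 fun h => hnint l (by rw [← h]; simp)
  · exact lt_of_le_of_ne hx4 fun h => hnint _ (by rw [h, Int.cast_natCast])

/-- The vertices of the hypersimplex `Δ(k,n)`. -/
def hypersimplexVertices (k n : ℕ) : Set (Fin n → ℝ) :=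
  {x | ∃ σ : Finset (Fin n), σ.card = k ∧ x = indicatorVec (σ : Set (Fin n))}

theorem finite_hypersimplexVertices (k n : ℕ) : (hypersimplexVertices k n).Finite :=
  (Set.finite_range fun σ : Finset (Fin n) => indicatorVec (σ : Set (Fin n))).subset
    fun _ ⟨σ, _, h⟩ => ⟨σ, h.symm⟩

theorem extremePoints_slab_subset (k : ℕ) (A : Finset (Fin n)) (l h : ℕ) :
    Set.extremePoints ℝ (slab k A l h) ⊆ hypersimplexVertices k n := fun _ hx =>
  exists_eq_indicatorVec (eq_zero_or_one_of_mem_extremePoints_slab hx) hx.1.2.1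

theorem slab_eq_convexHull (k : ℕ) (A : Finset (Fin n)) (l h : ℕ) :
    slab k A l h = convexHull ℝ (Set.extremePoints ℝ (slab k A l h)) :=
  eq_convexHull_extremePoints (isCompact_slab k A l h) (convex_slab k A l h)
    ((finite_hypersimplexVertices k n).subset (extremePoints_slab_subset k A l h))

theorem isPolytope_slab (k : ℕ) (A : Finset (Fin n)) (l h : ℕ) : IsPolytope (slab k A l h) := by
  have hfin := (finite_hypersimplexVertices k n).subset (extremePoints_slab_subset k A l h)
  refine ⟨hfin.toFinset, ?_⟩
  rw [hfin.coe_toFinset]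
  exact slab_eq_convexHull k A l h

theorem hypersimplex_eq_slab (k : ℕ) (A : Finset (Fin n)) : hypersimplex k n = slab k A 0 k := by
  refine subset_antisymm (convexHull_min ?_ (convex_slab _ _ _ _)) ?_
  · rintro _ ⟨σ, hσ, rfl⟩
    exact indicatorVec_mem_slab.2
      ⟨hσ, Nat.zero_le _, hσ ▸ Finset.card_le_card Finset.inter_subset_left⟩
  · rw [slab_eq_convexHull]
    exact convexHull_mono (extremePoints_slab_subset _ _ _ _)

theorem mem_hypersimplex {k : ℕ} {x : Fin n → ℝ} :
    x ∈ hypersimplex k n ↔ (∀ i, 0 ≤ x i ∧ x i ≤ 1) ∧ ∑ i, x i = k := by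
  rw [hypersimplex_eq_slab k ∅]
  simp [slab]

theorem isExtreme_coord_eq_zero (k : ℕ) (i : Fin n) :
    IsExtreme ℝ (hypersimplex k n) {x ∈ hypersimplex k n | x i = 0} := by
  refine ⟨Set.sep_subset _ _, ?_⟩
  rintro x hx y hy z ⟨-, hz⟩ ⟨a, b, ha, hb, -, rfl⟩
  refine ⟨hx, ?_⟩
  have h1 := ((mem_hypersimplex.1 hx).1 i).1
  have h2 := ((mem_hypersimplex.1 hy).1 i).1
  simp only [Pi.add_apply, Pi.smul_apply, smul_eq_mul] at hz
  nlinarith [mul_nonneg ha.le h1, mul_nonneg hb.le h2]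

theorem isExtreme_coord_eq_one (k : ℕ) (i : Fin n) :
    IsExtreme ℝ (hypersimplex k n) {x ∈ hypersimplex k n | x i = 1} := by
  refine ⟨Set.sep_subset _ _, ?_⟩
  rintro x hx y hy z ⟨-, hz⟩ ⟨a, b, ha, hb, hab, rfl⟩
  refine ⟨hx, ?_⟩
  have h1 := ((mem_hypersimplex.1 hx).1 i).2
  have h2 := ((mem_hypersimplex.1 hy).1 i).2
  simp only [Pi.add_apply, Pi.smul_apply, smul_eq_mul] at hz
  nlinarith [mul_nonneg ha.le (sub_nonneg.2 h1), mul_nonneg hb.le (sub_nonneg.2 h2)]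

theorem hypersimplexVertices_subset_extremePoints (k n : ℕ) :
    hypersimplexVertices k n ⊆ Set.extremePoints ℝ (hypersimplex k n) := by
  rintro _ ⟨σ, hσ, rfl⟩
  have hmem : indicatorVec (σ : Set (Fin n)) ∈ hypersimplex k n :=
    subset_convexHull ℝ _ ⟨σ, hσ, rfl⟩
  refine ⟨hmem, fun x hx y hy hxy => funext fun i => ?_⟩
  by_cases hi : i ∈ σ
  · have h1 : indicatorVec (σ : Set (Fin n)) i = 1 := by simp [indicatorVec, hi]
    rw [h1]
    exact ((isExtreme_coord_eq_one k i).left_mem_of_mem_openSegment hx hy ⟨hmem, h1⟩ hxy).2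
  · have h1 : indicatorVec (σ : Set (Fin n)) i = 0 := by simp [indicatorVec, hi]
    rw [h1]
    exact ((isExtreme_coord_eq_zero k i).left_mem_of_mem_openSegment hx hy ⟨hmem, h1⟩ hxy).2

theorem slab_compl {k : ℕ} (A : Finset (Fin n)) {l h : ℕ} (hl : l ≤ k) (hh : h ≤ k) :
    slab k Aᶜ (k - h) (k - l) = slab k A l h := by
  ext x
  simp only [slab, Set.mem_ofPred_eq, Nat.cast_sub hl, Nat.cast_sub hh]
  refine and_congr_right fun _ => and_congr_right fun hx => ?_
  have := Finset.sum_add_sum_compl A x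
  constructor <;> rintro ⟨h1, h2⟩ <;> constructor <;> linarith

/-- The subdivision of `Δ(k,n)` induced by the hyperplane `∑ i ∈ A, x i = μ`. -/
def hyperplaneSplit (k : ℕ) (A : Finset (Fin n)) (μ : ℕ) : Set (Set (Fin n → ℝ)) :=
  facesOfPair (slab k A 0 μ) (slab k A μ k)

theorem hyperplaneSplit_compl {k : ℕ} (A : Finset (Fin n)) {μ : ℕ} (hμ : μ ≤ k) :
    hyperplaneSplit k Aᶜ (k - μ) = hyperplaneSplit k A μ := by
  have h1 := slab_compl A hμ le_rfl
  have h2 := slab_compl A (Nat.zero_le k) hμ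
  rw [Nat.sub_self] at h1
  rw [Nat.sub_zero] at h2
  rw [hyperplaneSplit, hyperplaneSplit, h1, h2, facesOfPair_comm]

theorem slab_union {k : ℕ} (A : Finset (Fin n)) {μ : ℕ} (hμ : μ ≤ k) :
    slab k A 0 μ ∪ slab k A μ k = hypersimplex k n := by
  rw [hypersimplex_eq_slab k A]
  have hμ' : (μ : ℝ) ≤ k := Nat.cast_le.2 hμ
  have h0 : (0 : ℝ) ≤ μ := Nat.cast_nonneg _
  ext x
  simp only [slab, Set.mem_union, Set.mem_ofPred_eq, Nat.cast_zero]
  constructor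
  · rintro (⟨h1, h2, h3, h4⟩ | ⟨h1, h2, h3, h4⟩)
    · exact ⟨h1, h2, h3, h4.trans hμ'⟩
    · exact ⟨h1, h2, h0.trans h3, h4⟩
  · rintro ⟨h1, h2, h3, h4⟩
    exact (le_total (∑ i ∈ A, x i) μ).imp (fun h => ⟨h1, h2, h3, h⟩) fun h => ⟨h1, h2, h, h4⟩

theorem slab_inter {k : ℕ} (A : Finset (Fin n)) {μ : ℕ} (hμ : μ ≤ k) :
    slab k A 0 μ ∩ slab k A μ k = slab k A μ μ := by
  have hμ' : (μ : ℝ) ≤ k := Nat.cast_le.2 hμ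
  have h0 : (0 : ℝ) ≤ μ := Nat.cast_nonneg _
  ext x
  simp only [slab, Set.mem_inter_iff, Set.mem_ofPred_eq, Nat.cast_zero]
  constructor
  · rintro ⟨⟨h1, h2, h3, h4⟩, -, -, h5, h6⟩
    exact ⟨h1, h2, h5, h4⟩
  · rintro ⟨h1, h2, h3, h4⟩
    exact ⟨⟨h1, h2, h0.trans h3, h4⟩, h1, h2, h3, h4.trans hμ'⟩

theorem isFaceOf_slab_lower {k : ℕ} (A : Finset (Fin n)) {l h : ℕ} (hlh : l ≤ h) :
    IsFaceOf (slab k A l l) (slab k A l h) := by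
  have hlh' : (l : ℝ) ≤ h := Nat.cast_le.2 hlh
  refine ⟨⟨fun x hx => ⟨hx.1, hx.2.1, hx.2.2.1, hx.2.2.2.trans hlh'⟩, ?_⟩, convex_slab _ _ _ _⟩
  rintro x hx y hy z hz ⟨a, b, ha, hb, hab, rfl⟩
  refine ⟨hx.1, hx.2.1, hx.2.2.1, ?_⟩
  have h1 := hx.2.2.1
  have h2 := hy.2.2.1
  have h3 := hz.2.2.2
  simp only [Pi.add_apply, Pi.smul_apply, smul_eq_mul, Finset.sum_add_distrib,
    ← Finset.mul_sum] at h3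
  nlinarith [mul_nonneg ha.le (sub_nonneg.2 h1), mul_nonneg hb.le (sub_nonneg.2 h2)]

theorem isFaceOf_slab_upper {k : ℕ} (A : Finset (Fin n)) {l h : ℕ} (hlh : l ≤ h) (hhk : h ≤ k) :
    IsFaceOf (slab k A h h) (slab k A l h) := by
  rw [← slab_compl A hhk hhk, ← slab_compl A (hlh.trans hhk) hhk]
  exact isFaceOf_slab_lower _ (by omega)

/-- The hyperplane `∑ i ∈ A, x i = μ` splits `Δ(k,n)`. -/
def IsSplitDatum (k : ℕ) (A : Finset (Fin n)) (μ : ℕ) : Prop :=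
  1 ≤ μ ∧ μ < k ∧ μ < A.card ∧ k < Aᶜ.card + μ

theorem IsSplitDatum.compl {k : ℕ} {A : Finset (Fin n)} {μ : ℕ} (h : IsSplitDatum k A μ) :
    IsSplitDatum k Aᶜ (k - μ) := by
  obtain ⟨h1, h2, h3, h4⟩ := h
  refine ⟨?_, ?_, ?_, ?_⟩
  · omega
  · omega
  · omega
  · rw [compl_compl]; omega

theorem exists_inter_eq {A s : Finset (Fin n)} (hs : s ⊆ A) {q : ℕ} (hq : q ≤ Aᶜ.card) :
    ∃ σ : Finset (Fin n), σ.card = s.card + q ∧ σ ∩ A = s := by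
  obtain ⟨t, ht, rfl⟩ := Finset.exists_subset_card_eq hq
  have htA : Disjoint t A := Finset.disjoint_of_subset_left ht disjoint_compl_left
  refine ⟨s ∪ t, Finset.card_union_of_disjoint (Finset.disjoint_of_subset_left hs htA.symm), ?_⟩
  rw [Finset.union_inter_distrib_right, Finset.disjoint_iff_inter_eq_empty.1 htA,
    Finset.union_empty, Finset.inter_eq_left.2 hs]

theorem exists_card_inter_eq {A : Finset (Fin n)} {p q : ℕ} (hp : p ≤ A.card)
    (hq : q ≤ Aᶜ.card) : ∃ σ : Finset (Fin n), σ.card = p + q ∧ (σ ∩ A).card = p := by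
  obtain ⟨s, hs, rfl⟩ := Finset.exists_subset_card_eq hp
  obtain ⟨σ, hσ, hσA⟩ := exists_inter_eq hs hq
  exact ⟨σ, hσ, by rw [hσA]⟩

theorem IsSplitDatum.not_subset {k : ℕ} {A : Finset (Fin n)} {μ : ℕ} (h : IsSplitDatum k A μ) :
    ¬ slab k A 0 μ ⊆ slab k A μ k := by
  obtain ⟨h1, h2, h3, h4⟩ := h
  obtain ⟨σ, hσ, hσA⟩ := exists_card_inter_eq (A := A) (p := μ - 1) (q := k - μ + 1)
    (by omega) (by omega)
  intro hsub
  have := (indicatorVec_mem_slab.1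
    (hsub (indicatorVec_mem_slab (σ := σ).2 ⟨by omega, Nat.zero_le _, by omega⟩))).2.1
  omega

theorem IsSplitDatum.not_subset' {k : ℕ} {A : Finset (Fin n)} {μ : ℕ} (h : IsSplitDatum k A μ) :
    ¬ slab k A μ k ⊆ slab k A 0 μ := by
  have := h.compl.not_subset
  have h1 := slab_compl A h.2.1.le le_rfl
  have h2 := slab_compl A (Nat.zero_le k) h.2.1.le
  rw [Nat.sub_self] at h1
  rw [Nat.sub_zero] at h2
  rwa [h1, h2] at this

theorem IsSplitDatum.isSplit {k : ℕ} {A : Finset (Fin n)} {μ : ℕ} (h : IsSplitDatum k A μ) :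
    IsSplit (hypersimplex k n) (hyperplaneSplit k A μ) := by
  have hμ := h.2.1.le
  refine isSplit_facesOfPair (isPolytope_slab _ _ _ _) (isPolytope_slab _ _ _ _) (slab_union A hμ)
    ?_ ?_ ?_ ?_ h.not_subset h.not_subset'
  · rw [slab_inter A hμ]
    exact isFaceOf_slab_upper A (Nat.zero_le _) hμ
  · rw [slab_inter A hμ]
    exact isFaceOf_slab_lower A hμ
  all_goals
    exact Set.Subset.trans (extremePoints_slab_subset _ _ _ _)
      (hypersimplexVertices_subset_extremePoints k n)

end Slab

section TwoValues

variable {n : ℕ}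

theorem sum_insert_erase {σ : Finset (Fin n)} {i j : Fin n} (hi : i ∈ σ) (hj : j ∉ σ)
    (a : Fin n → ℝ) : ∑ l ∈ insert j (σ.erase i), a l = ∑ l ∈ σ, a l - a i + a j := by
  rw [Finset.sum_insert fun h => hj (Finset.mem_of_mem_erase h), ← Finset.sum_erase_add σ a hi]
  ring

theorem card_insert_erase {σ : Finset (Fin n)} {i j : Fin n} (hi : i ∈ σ) (hj : j ∉ σ) :
    (insert j (σ.erase i)).card = σ.card := by
  rw [Finset.card_insert_of_notMem fun h => hj (Finset.mem_of_mem_erase h)]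
  exact Finset.card_erase_add_one hi

theorem insert_erase_sdiff {σ τ : Finset (Fin n)} {j : Fin n} (i : Fin n) (hj : j ∈ τ) :
    insert j (σ.erase i) \ τ = (σ \ τ).erase i := by
  rw [Finset.insert_sdiff_of_mem _ hj, Finset.erase_sdiff_comm]

theorem sdiff_insert_erase {σ τ : Finset (Fin n)} {j : Fin n} (i : Fin n) (hj : j ∉ σ) :
    σ \ insert i (τ.erase j) = (σ \ τ).erase i := by
  ext x
  have : x ∈ σ → x ≠ j := fun h h' => hj (h' ▸ h)
  simp only [Finset.mem_sdiff, Finset.mem_insert, Finset.mem_erase]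
  tauto

theorem insert_erase_insert_erase {τ : Finset (Fin n)} {i j : Fin n} (hi : i ∉ τ) (hj : j ∈ τ) :
    insert j ((insert i (τ.erase j)).erase i) = τ := by
  rw [Finset.erase_insert fun h => hi (Finset.mem_of_mem_erase h), Finset.insert_erase hj]

theorem notMem_insert_erase {τ : Finset (Fin n)} {i j : Fin n} (hi : i ∉ τ) (hj : j ∈ τ) :
    j ∉ insert i (τ.erase j) := by
  have : j ≠ i := fun h => hi (h ▸ hj)
  simp [this]

/-- Two sets that differ by a double exchange, both modified at a common element. -/
theorem exchange_of_mem {σ τ : Finset (Fin n)} {i i' j j' l : Fin n}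
    (hστ : ∀ x, x ∈ σ ∧ x ∉ τ ↔ x = i ∨ x = i') (hτσ : ∀ x, x ∈ τ ∧ x ∉ σ ↔ x = j ∨ x = j')
    (hii : i ≠ i') (hjj : j ≠ j') (hlσ : l ∈ σ) (hlτ : l ∈ τ) :
    i' ∈ insert j (σ.erase l) ∧ j' ∉ insert j (σ.erase l) ∧
      insert j' ((insert j (σ.erase l)).erase i') = insert i (τ.erase l) := by
  have h1 := hστ i
  have h2 := hστ i'
  have h3 := hτσ j
  have h4 := hτσ j'
  have h5 := hστ l
  have h6 := hτσ l
  refine ⟨by grind, by grind, ?_⟩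
  ext x
  have h7 := hστ x
  have h8 := hτσ x
  clear hστ hτσ
  simp only [Finset.mem_insert, Finset.mem_erase]
  by_cases x = i <;> by_cases x = i' <;> by_cases x = j <;> by_cases x = j' <;>
    by_cases x = l <;> simp_all
  exact ⟨h7, h8⟩

/-- Two sets that differ by a double exchange, both modified at an element of neither. -/
theorem exchange_of_notMem {σ τ : Finset (Fin n)} {i i' j j' l : Fin n}
    (hστ : ∀ x, x ∈ σ ∧ x ∉ τ ↔ x = i ∨ x = i') (hτσ : ∀ x, x ∈ τ ∧ x ∉ σ ↔ x = j ∨ x = j')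
    (hii : i ≠ i') (hjj : j ≠ j') (hlσ : l ∉ σ) (hlτ : l ∉ τ) :
    i ∈ insert l (σ.erase i') ∧ j ∉ insert l (σ.erase i') ∧
      insert j ((insert l (σ.erase i')).erase i) = insert l (τ.erase j') := by
  have h1 := hστ i
  have h2 := hστ i'
  have h3 := hτσ j
  have h4 := hτσ j'
  have h5 := hστ l
  have h6 := hτσ l
  refine ⟨by grind, by grind, ?_⟩
  ext x
  have h7 := hστ x
  have h8 := hτσ x
  clear hστ hτσ
  simp only [Finset.mem_insert, Finset.mem_erase]
  by_cases x = i <;> by_cases x = i' <;> by_cases x = j <;> by_cases x = j' <;>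
    by_cases x = l <;> simp_all
  exact ⟨h7, h8⟩

/-- If the hyperplane `∑ l, a l * x l = u` separates vertices of `Δ(k,n)` strictly without
separating adjacent ones, then some such pair of vertices is at distance two and the
coefficients at the four coordinates where they differ are as follows. -/
theorem exists_opposite_pair {k : ℕ} {a : Fin n → ℝ} {u : ℝ}
    (hadj : ∀ σ : Finset (Fin n), σ.card = k → ∀ i ∈ σ, ∀ j ∉ σ,
      u < ∑ l ∈ σ, a l → u ≤ ∑ l ∈ insert j (σ.erase i), a l)
    (hpos : ∃ σ : Finset (Fin n), σ.card = k ∧ u < ∑ l ∈ σ, a l)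
    (hneg : ∃ σ : Finset (Fin n), σ.card = k ∧ ∑ l ∈ σ, a l < u) :
    ∃ (σ τ : Finset (Fin n)) (i i' j j' : Fin n), σ.card = k ∧ τ.card = k ∧ i ≠ i' ∧ j ≠ j' ∧
      σ \ τ = {i, i'} ∧ τ \ σ = {j, j'} ∧ a i = a i' ∧ a j = a j' ∧ a j < a i ∧
      ∑ l ∈ σ, a l = u + (a i - a j) ∧ ∑ l ∈ τ, a l = u - (a i - a j) := by
  have hex : ∃ d, ∃ σ τ : Finset (Fin n), σ.card = k ∧ τ.card = k ∧ u < ∑ l ∈ σ, a l ∧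
      ∑ l ∈ τ, a l < u ∧ (σ \ τ).card = d := by
    obtain ⟨σ, hσ, hσu⟩ := hpos
    obtain ⟨τ, hτ, hτu⟩ := hneg
    exact ⟨_, σ, τ, hσ, hτ, hσu, hτu, rfl⟩
  obtain ⟨σ, τ, hσ, hτ, hσu, hτu, hd⟩ := Nat.find_spec hex
  have hmin := fun m => Nat.find_min hex (m := m)
  rw [← hd] at hmin
  clear hd
  have hswap : ∀ i ∈ σ \ τ, ∀ j ∈ τ \ σ, ∑ l ∈ σ, a l = u + (a i - a j) ∧
      ∑ l ∈ τ, a l = u - (a i - a j) := by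
    intro i hi j hj
    obtain ⟨hi1, hi2⟩ := Finset.mem_sdiff.1 hi
    obtain ⟨hj1, hj2⟩ := Finset.mem_sdiff.1 hj
    have hlt : ((σ \ τ).erase i).card < (σ \ τ).card := Finset.card_erase_lt_of_mem hi
    have h1 := sum_insert_erase hi1 hj2 a
    have h2 := sum_insert_erase hj1 hi2 a
    have h3 := hadj σ hσ i hi1 j hj2 hσu
    have h4 : ¬ u < ∑ l ∈ insert j (σ.erase i), a l := by
      intro h
      refine hmin _ hlt ⟨_, τ, (card_insert_erase hi1 hj2).trans hσ, hτ, h, hτu, ?_⟩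
      rw [insert_erase_sdiff i hj1]
    have h5 : ¬ ∑ l ∈ insert i (τ.erase j), a l < u := by
      intro h
      refine hmin _ hlt ⟨σ, _, hσ, (card_insert_erase hj1 hi2).trans hτ, hσu, h, ?_⟩
      rw [sdiff_insert_erase i hj2]
    have h6 : ¬ u < ∑ l ∈ insert i (τ.erase j), a l := by
      intro h
      have h7 := hadj _ ((card_insert_erase hj1 hi2).trans hτ) i (Finset.mem_insert_self _ _) j
        (notMem_insert_erase hi2 hj1) h
      rw [insert_erase_insert_erase hi2 hj1] at h7
      linarith
    constructor <;> linarith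
  have hcard : (σ \ τ).card = (τ \ σ).card := Finset.card_sdiff_comm (hσ.trans hτ.symm)
  have hne : (σ \ τ).Nonempty := by
    rw [Finset.nonempty_iff_ne_empty]
    intro h
    have := Finset.eq_of_subset_of_card_le (Finset.sdiff_eq_empty_iff_subset.1 h)
      (hτ.trans hσ.symm).le
    rw [this] at hσu
    linarith
  obtain ⟨i, hi⟩ := hne
  obtain ⟨j, hj⟩ : (τ \ σ).Nonempty := by
    rw [← Finset.card_pos, ← hcard]
    exact Finset.card_pos.2 ⟨i, hi⟩
  obtain ⟨hσi, hτi⟩ := hswap i hi j hj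
  have hα : ∀ l ∈ σ \ τ, a l = a i := fun l hl => by linarith [(hswap l hl j hj).1]
  have hβ : ∀ l ∈ τ \ σ, a l = a j := fun l hl => by linarith [(hswap i hi l hl).1]
  have htwo : (σ \ τ).card = 2 := by
    have h1 := Finset.sum_sdiff_sub_sum_sdiff (s₁ := τ) (s₂ := σ) (f := a)
    rw [Finset.sum_congr rfl hα, Finset.sum_congr rfl hβ, Finset.sum_const, Finset.sum_const,
      ← hcard, nsmul_eq_mul, nsmul_eq_mul] at h1
    have h2 : (((σ \ τ).card : ℝ) - 2) * (a i - a j) = 0 := by linarith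
    rcases mul_eq_zero.1 h2 with h | h
    · have : ((σ \ τ).card : ℝ) = 2 := by linarith
      exact_mod_cast this
    · linarith
  obtain ⟨p, q, hpq, hpqs⟩ := Finset.card_eq_two.1 htwo
  obtain ⟨r, s, hrs, hrss⟩ := Finset.card_eq_two.1 (hcard.symm.trans htwo)
  have hp := hα p (by simp [hpqs])
  have hq := hα q (by simp [hpqs])
  have hr := hβ r (by simp [hrss])
  have hs := hβ s (by simp [hrss])
  refine ⟨σ, τ, p, q, r, s, hσ, hτ, hpq, hrs, hpqs, hrss, ?_, ?_, ?_, ?_, ?_⟩ <;> linarith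

theorem exists_two_values {k : ℕ} {a : Fin n → ℝ} {u : ℝ}
    (hadj : ∀ σ : Finset (Fin n), σ.card = k → ∀ i ∈ σ, ∀ j ∉ σ,
      u < ∑ l ∈ σ, a l → u ≤ ∑ l ∈ insert j (σ.erase i), a l)
    (hpos : ∃ σ : Finset (Fin n), σ.card = k ∧ u < ∑ l ∈ σ, a l)
    (hneg : ∃ σ : Finset (Fin n), σ.card = k ∧ ∑ l ∈ σ, a l < u) :
    ∃ (α β : ℝ) (A : Finset (Fin n)) (μ : ℕ), β < α ∧
      (∀ i, a i = β + (α - β) * if i ∈ A then 1 else 0) ∧ IsSplitDatum k A μ ∧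
      u = β * k + (α - β) * μ := by
  obtain ⟨σ, τ, i, i', j, j', hσ, hτ, hii, hjj, hστ, hτσ, hai, haj, hlt, hsσ, hsτ⟩ :=
    exists_opposite_pair hadj hpos hneg
  have hστ' : ∀ x, x ∈ σ ∧ x ∉ τ ↔ x = i ∨ x = i' := fun x => by
    rw [← Finset.mem_sdiff, hστ, Finset.mem_insert, Finset.mem_singleton]
  have hτσ' : ∀ x, x ∈ τ ∧ x ∉ σ ↔ x = j ∨ x = j' := fun x => by
    rw [← Finset.mem_sdiff, hτσ, Finset.mem_insert, Finset.mem_singleton]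
  obtain ⟨hi1, hi2⟩ := (hστ' i).2 (Or.inl rfl)
  obtain ⟨hi1', hi2'⟩ := (hστ' i').2 (Or.inr rfl)
  obtain ⟨hj1, hj2⟩ := (hτσ' j).2 (Or.inl rfl)
  obtain ⟨hj1', hj2'⟩ := (hτσ' j').2 (Or.inr rfl)
  have hval : ∀ l, a l = a i ∨ a l = a j := by
    intro l
    by_contra! hl
    by_cases hlσ : l ∈ σ <;> by_cases hlτ : l ∈ τ
    · have h1 := sum_insert_erase hlσ hj2 a
      have h2 := sum_insert_erase hlτ hi2 a
      have c1 := (card_insert_erase hlσ hj2).trans hσ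
      have c2 := (card_insert_erase hlτ hi2).trans hτ
      have h3 := hadj σ hσ l hlσ j hj2 (by linarith)
      obtain ⟨d1, d2, d3⟩ := exchange_of_mem hστ' hτσ' hii hjj hlσ hlτ
      have h4 := hadj _ c1 i' d1 j' d2
      rw [d3] at h4
      have h6 := hadj _ c2 i (Finset.mem_insert_self _ _) l (notMem_insert_erase hi2 hlτ)
      rw [insert_erase_insert_erase hi2 hlτ] at h6
      have h8 : a l < a i := lt_of_le_of_ne (by linarith) hl.1
      have h9 : ¬ u < ∑ x ∈ insert i (τ.erase l), a x := fun h => by linarith [h6 h]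
      have h10 := h4 (by linarith)
      exact hl.2 (by linarith)
    · exact hl.1 (((hστ' l).1 ⟨hlσ, hlτ⟩).elim (fun h => h ▸ rfl) fun h => h ▸ hai.symm)
    · exact hl.2 (((hτσ' l).1 ⟨hlτ, hlσ⟩).elim (fun h => h ▸ rfl) fun h => h ▸ haj.symm)
    · have h1 := sum_insert_erase hi1' hlσ a
      have h2 := sum_insert_erase hj1' hlτ a
      have c1 := (card_insert_erase hi1' hlσ).trans hσ
      have c2 := (card_insert_erase hj1' hlτ).trans hτ
      have h3 := hadj σ hσ i' hi1' l hlσ (by linarith)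
      obtain ⟨d1, d2, d3⟩ := exchange_of_notMem hστ' hτσ' hii hjj hlσ hlτ
      have h4 := hadj _ c1 i d1 j d2
      rw [d3] at h4
      have h6 := hadj _ c2 l (Finset.mem_insert_self _ _) j' (notMem_insert_erase hlτ hj1')
      rw [insert_erase_insert_erase hlτ hj1'] at h6
      have h8 : a j < a l := lt_of_le_of_ne (by linarith) hl.2.symm
      have h9 : ¬ u < ∑ x ∈ insert l (τ.erase j'), a x := fun h => by linarith [h6 h]
      have h10 := h4 (by linarith)
      exact hl.1 (by linarith)
  set A : Finset (Fin n) := Finset.univ.filter fun l => a l = a i with hA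
  have haA : ∀ l, a l = a j + (a i - a j) * if l ∈ A then 1 else 0 := by
    intro l
    by_cases hl : a l = a i
    · simp [hA, hl]
    · rw [if_neg (by simpa [hA] using hl), mul_zero, add_zero]
      exact (hval l).resolve_left hl
  have hsum : ∀ υ : Finset (Fin n), υ.card = k →
      ∑ l ∈ υ, a l = a j * k + (a i - a j) * (υ ∩ A).card := by
    intro υ hυ
    rw [Finset.sum_congr rfl fun l _ => haA l, Finset.sum_add_distrib, ← Finset.mul_sum,
      Finset.sum_const, hυ, nsmul_eq_mul, Finset.sum_ite_mem]
    simp [mul_comm]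
  set ω := insert j (σ.erase i) with hω
  have hωs : ∑ l ∈ ω, a l = u := by
    rw [hω, sum_insert_erase hi1 hj2]
    linarith
  have hωk := (card_insert_erase hi1 hj2).trans hσ
  have e1 := hsum σ hσ
  have e2 := hsum τ hτ
  have e3 := hsum ω hωk
  have hpos' : a i - a j ≠ 0 := by linarith
  have n1 : (σ ∩ A).card = (ω ∩ A).card + 1 := by
    have : ((σ ∩ A).card : ℝ) = (ω ∩ A).card + 1 := mul_left_cancel₀ hpos' (by linarith)
    exact_mod_cast this
  have n2 : (τ ∩ A).card + 1 = (ω ∩ A).card := by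
    have : ((τ ∩ A).card : ℝ) + 1 = (ω ∩ A).card := mul_left_cancel₀ hpos' (by linarith)
    exact_mod_cast this
  have m1 : (σ ∩ A).card ≤ σ.card := Finset.card_le_card Finset.inter_subset_left
  have m2 : (σ ∩ A).card ≤ A.card := Finset.card_le_card Finset.inter_subset_right
  have m3 : (τ \ A).card ≤ Aᶜ.card := Finset.card_le_card fun x hx => by
    simpa using (Finset.mem_sdiff.1 hx).2
  have m4 := Finset.card_sdiff_add_card_inter τ A
  refine ⟨a i, a j, A, (ω ∩ A).card, hlt, haA, ⟨?_, ?_, ?_, ?_⟩, by linarith⟩ <;> omega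

end TwoValues

section Separation

variable {E : Type*} [NormedAddCommGroup E] [NormedSpace ℝ E] {P U C D : Set E} {π : E →ᵃ[ℝ] E}

theorem exists_mem_interior_preimage (hπc : Continuous π) (hπP : ∀ x ∈ P, π x = x)
    (hU : IsOpen U) (hUP : ∀ x ∈ U, π x ∈ U ∩ P) (hPU : P ⊆ closure U) (hD : IsClosed D)
    (hP : C ∪ D = P) (hCD : ¬ C ⊆ D) : ∃ q ∈ C, q ∈ interior (π ⁻¹' C) := by
  obtain ⟨p, hpC, hpD⟩ := Set.not_subset.1 hCD
  have hpP : p ∈ P := hP ▸ Or.inl hpC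
  have hW : IsOpen (π ⁻¹' Dᶜ) := hD.isOpen_compl.preimage hπc
  obtain ⟨x, hxW, hxU⟩ := mem_closure_iff.1 (hPU hpP) _ hW (by simpa [hπP p hpP] using hpD)
  have hsub : U ∩ π ⁻¹' Dᶜ ⊆ π ⁻¹' C := by
    rintro y ⟨hyU, hyD⟩
    exact ((hP.symm ▸ (hUP y hyU).2 : π y ∈ C ∪ D)).resolve_right hyD
  refine ⟨π x, hsub ⟨hxU, hxW⟩, interior_maximal hsub (hU.inter hW) ⟨(hUP x hxU).1, ?_⟩⟩
  rw [Set.mem_preimage, hπP _ (hUP x hxU).2]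
  exact hxW

theorem disjoint_interior_preimage (hπP : ∀ x ∈ P, π x = x) (hP : C ∪ D = P)
    (hCD : ¬ C ⊆ D) (hext : IsExtreme ℝ C (C ∩ D)) :
    Disjoint (interior (π ⁻¹' C)) (interior (π ⁻¹' D)) := by
  refine Set.disjoint_left.2 fun z hzC hzD => hCD fun y hy => ?_
  have hlim : Filter.Tendsto (fun t : ℝ => AffineMap.lineMap y z t) (nhdsWithin 1 (Set.Ioi 1))
      (nhds z) := by
    refine Filter.Tendsto.mono_left ?_ nhdsWithin_le_nhds
    simpa using (AffineMap.lineMap_continuous (p := y) (q := z)).tendsto (1 : ℝ)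
  obtain ⟨t, ht, ht1⟩ := ((hlim.eventually (isOpen_interior.mem_nhds hzC)).and
    self_mem_nhdsWithin).exists
  replace ht1 : 1 < t := ht1
  have hseg : π z ∈ openSegment ℝ y (π (AffineMap.lineMap y z t)) := by
    have ht0 : t ≠ 0 := by linarith
    rw [AffineMap.apply_lineMap, hπP y (hP ▸ Or.inl hy), openSegment_eq_image_lineMap]
    refine ⟨t⁻¹, ⟨by positivity, inv_lt_one_of_one_lt₀ ht1⟩, ?_⟩
    rw [AffineMap.lineMap_apply_module', AffineMap.lineMap_apply_module', add_sub_cancel_right,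
      smul_smul, inv_mul_cancel₀ ht0, one_smul, sub_add_cancel]
  exact (hext.left_mem_of_mem_openSegment hy (interior_subset (s := π ⁻¹' C) ht)
    ⟨interior_subset (s := π ⁻¹' C) hzC, interior_subset (s := π ⁻¹' D) hzD⟩ hseg).2

/-- Two closed convex sets that cover `P` and meet in a common face are separated by a hyperplane
which contains neither of them. The affine map `π` is a projection to the affine hull of `P`. -/
theorem exists_separating (hπc : Continuous π) (hπP : ∀ x ∈ P, π x = x)
    (hU : IsOpen U) (hUP : ∀ x ∈ U, π x ∈ U ∩ P) (hPU : P ⊆ closure U) (hC : IsClosed C)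
    (hD : IsClosed D) (hCconv : Convex ℝ C) (hDconv : Convex ℝ D) (hP : C ∪ D = P)
    (hCD : ¬ C ⊆ D) (hDC : ¬ D ⊆ C) (hext : IsExtreme ℝ C (C ∩ D)) :
    ∃ (f : StrongDual ℝ E) (u : ℝ), (∀ x ∈ C, f x ≤ u) ∧ (∀ x ∈ D, u ≤ f x) ∧
      (∃ q ∈ C, f q < u) ∧ ∃ q ∈ D, u < f q := by
  obtain ⟨q, hq, hqi⟩ := exists_mem_interior_preimage hπc hπP hU hUP hPU hD hP hCD
  obtain ⟨q', hq', hqi'⟩ := exists_mem_interior_preimage hπc hπP hU hUP hPU hC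
    (Set.union_comm D C ▸ hP) hDC
  have hC' : Convex ℝ (π ⁻¹' C) := hCconv.affine_preimage π
  have hD' : Convex ℝ (π ⁻¹' D) := hDconv.affine_preimage π
  obtain ⟨f, u, hf, hf'⟩ := geometric_hahn_banach_open_open hC'.interior isOpen_interior
    hD'.interior isOpen_interior (disjoint_interior_preimage hπP hP hCD hext)
  have hle : closure (interior (π ⁻¹' C)) ⊆ {x | f x ≤ u} :=
    closure_minimal (fun x hx => (hf x hx).le) (isClosed_le f.continuous continuous_const)
  have hge : closure (interior (π ⁻¹' D)) ⊆ {x | u ≤ f x} :=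
    closure_minimal (fun x hx => (hf' x hx).le) (isClosed_le continuous_const f.continuous)
  rw [hC'.closure_interior_eq_closure_of_nonempty_interior ⟨q, hqi⟩] at hle
  rw [hD'.closure_interior_eq_closure_of_nonempty_interior ⟨q', hqi'⟩] at hge
  refine ⟨f, u, fun x hx => hle (subset_closure ?_), fun x hx => hge (subset_closure ?_),
    ⟨q, hq, hf q hqi⟩, q', hq', hf' q' hqi'⟩
  · rwa [Set.mem_preimage, hπP x (hP ▸ Or.inl hx)]
  · rwa [Set.mem_preimage, hπP x (hP ▸ Or.inr hx)]

theorem mem_of_le_of_separating (hPconv : Convex ℝ P) (hC : IsClosed C) (hP : C ∪ D = P)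
    {f : StrongDual ℝ E} {u : ℝ} (hD : ∀ x ∈ D, u ≤ f x) {q : E} (hq : q ∈ C) (hqu : f q < u)
    {x : E} (hx : x ∈ P) (hxu : f x ≤ u) : x ∈ C := by
  by_contra hxC
  have hlim : Filter.Tendsto (fun t : ℝ => AffineMap.lineMap x q t) (nhdsWithin 0 (Set.Ioi 0))
      (nhds x) := by
    refine Filter.Tendsto.mono_left ?_ nhdsWithin_le_nhds
    simpa using (AffineMap.lineMap_continuous (p := x) (q := q)).tendsto (0 : ℝ)
  obtain ⟨t, ht, ht0, ht1⟩ := ((hlim.eventually (hC.isOpen_compl.mem_nhds hxC)).and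
    (Ioo_mem_nhdsGT (zero_lt_one' ℝ))).exists
  have hmem : AffineMap.lineMap x q t ∈ C ∪ D :=
    hP ▸ hPconv.lineMap_mem hx (hP ▸ Or.inl hq) ⟨ht0.le, ht1.le⟩
  have h1 := hD _ (hmem.resolve_left ht)
  rw [AffineMap.lineMap_apply_module', map_add, map_smul, map_sub, smul_eq_mul] at h1
  nlinarith

end Separation

section SplitsOfHypersimplex

variable {n : ℕ}

/-- The projection to the hyperplane `∑ i, x i = k` along the all-ones vector. -/
noncomputable def projSum (k n : ℕ) : (Fin n → ℝ) →ᵃ[ℝ] (Fin n → ℝ) where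
  toFun x := fun i => x i + (k - ∑ j, x j) / n
  linear :=
    { toFun := fun x i => x i - (∑ j, x j) / n
      map_add' := fun x y => by
        ext i
        simp only [Pi.add_apply, Finset.sum_add_distrib]
        ring
      map_smul' := fun c x => by
        ext i
        simp only [Pi.smul_apply, smul_eq_mul, ← Finset.mul_sum, RingHom.id_apply]
        ring }
  map_vadd' := fun x y => by
    ext i
    simp only [vadd_eq_add, Pi.add_apply, Finset.sum_add_distrib, LinearMap.coe_mk, AddHom.coe_mk]
    ring

theorem projSum_apply (k : ℕ) (x : Fin n → ℝ) (i : Fin n) :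
    projSum k n x i = x i + (k - ∑ j, x j) / n := rfl

theorem continuous_projSum (k n : ℕ) : Continuous (projSum k n) := by
  refine continuous_pi fun i => ?_
  simp only [projSum_apply]
  fun_prop

theorem sum_projSum {k : ℕ} (hn : n ≠ 0) (x : Fin n → ℝ) : ∑ i, projSum k n x i = k := by
  have : (n : ℝ) ≠ 0 := Nat.cast_ne_zero.2 hn
  simp only [projSum_apply, Finset.sum_add_distrib, Finset.sum_const, Finset.card_univ,
    Fintype.card_fin, nsmul_eq_mul]
  field_simp
  ring

theorem projSum_eq_self {k : ℕ} {x : Fin n → ℝ} (hx : ∑ i, x i = k) : projSum k n x = x := by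
  ext i
  simp [projSum_apply, hx]

theorem hypersimplex_subset_closure {k : ℕ} (hk : 0 < k) (hkn : k < n) :
    hypersimplex k n ⊆ closure {x | ∀ i, 0 < projSum k n x i ∧ projSum k n x i < 1} := by
  intro x hx
  obtain ⟨hx01, hxk⟩ := mem_hypersimplex.1 hx
  have hn : (0 : ℝ) < n := by exact_mod_cast hk.trans hkn
  set c : Fin n → ℝ := fun _ => k / n with hc
  have hc0 : (0 : ℝ) < k / n := by positivity
  have hc1 : (k : ℝ) / n < 1 := (div_lt_one hn).2 (by exact_mod_cast hkn)
  have hck : ∑ i, c i = k := by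
    simp only [hc, Finset.sum_const, Finset.card_univ, Fintype.card_fin, nsmul_eq_mul]
    field_simp
  have hlim : Filter.Tendsto (fun t : ℝ => AffineMap.lineMap x c t) (nhdsWithin 0 (Set.Ioi 0))
      (nhds x) := by
    refine Filter.Tendsto.mono_left ?_ nhdsWithin_le_nhds
    simpa using (AffineMap.lineMap_continuous (p := x) (q := c)).tendsto (0 : ℝ)
  refine mem_closure_of_tendsto hlim ?_
  filter_upwards [Ioo_mem_nhdsGT (zero_lt_one' ℝ)] with t ht i
  obtain ⟨ht0, ht1⟩ := ht
  have h0 := (hx01 i).1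
  have h1 := (hx01 i).2
  rw [AffineMap.apply_lineMap, projSum_eq_self hxk, projSum_eq_self hck,
    AffineMap.lineMap_apply_module]
  simp only [Pi.add_apply, Pi.smul_apply, smul_eq_mul, hc]
  constructor <;> nlinarith [mul_pos ht0 hc0]

theorem exists_separating_hypersimplex {k : ℕ} (hk : 0 < k) (hkn : k < n)
    {C D : Set (Fin n → ℝ)} (hC : IsPolytope C) (hD : IsPolytope D)
    (hP : C ∪ D = hypersimplex k n) (hCD : ¬ C ⊆ D) (hDC : ¬ D ⊆ C)
    (hext : IsExtreme ℝ C (C ∩ D)) :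
    ∃ (f : StrongDual ℝ (Fin n → ℝ)) (u : ℝ), (∀ x, x ∈ C ↔ x ∈ hypersimplex k n ∧ f x ≤ u) ∧
      (∀ x, x ∈ D ↔ x ∈ hypersimplex k n ∧ u ≤ f x) ∧
      (∃ x ∈ hypersimplex k n, f x < u) ∧ ∃ x ∈ hypersimplex k n, u < f x := by
  have hn : n ≠ 0 := (hk.trans hkn).ne'
  have hconv : Convex ℝ (hypersimplex k n) := convex_convexHull ℝ _
  have hproj : ∀ x ∈ hypersimplex k n, projSum k n x = x :=
    fun x hx => projSum_eq_self (mem_hypersimplex.1 hx).2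
  have hU : IsOpen {x | ∀ i, 0 < projSum k n x i ∧ projSum k n x i < 1} := by
    have hcont := fun i => (continuous_apply i).comp (continuous_projSum k n)
    simp only [Set.ofPred_forall]
    exact isOpen_iInter_of_finite fun i =>
      (isOpen_lt continuous_const (hcont i)).inter (isOpen_lt (hcont i) continuous_const)
  have hUP : ∀ x ∈ {x | ∀ i, 0 < projSum k n x i ∧ projSum k n x i < 1},
      projSum k n x ∈ {x | ∀ i, 0 < projSum k n x i ∧ projSum k n x i < 1} ∩ hypersimplex k n := by
    intro x hx
    have hP' : projSum k n x ∈ hypersimplex k n :=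
      mem_hypersimplex.2 ⟨fun i => ⟨(hx i).1.le, (hx i).2.le⟩, sum_projSum hn x⟩
    refine ⟨fun i => ?_, hP'⟩
    rw [hproj _ hP']
    exact hx i
  obtain ⟨f, u, hfC, hfD, ⟨q, hq, hqu⟩, q', hq', hqu'⟩ :=
    exists_separating (continuous_projSum k n) hproj hU hUP
      (hypersimplex_subset_closure hk hkn) hC.isCompact.isClosed hD.isCompact.isClosed
      hC.convex hD.convex hP hCD hDC hext
  have hCP : C ⊆ hypersimplex k n := hP ▸ Set.subset_union_left
  have hDP : D ⊆ hypersimplex k n := hP ▸ Set.subset_union_right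
  refine ⟨f, u, fun x => ⟨fun h => ⟨hCP h, hfC x h⟩, fun h => ?_⟩,
    fun x => ⟨fun h => ⟨hDP h, hfD x h⟩, fun h => ?_⟩, ⟨q, hCP hq, hqu⟩, q', hDP hq', hqu'⟩
  · exact mem_of_le_of_separating hconv hC.isCompact.isClosed hP hfD hq hqu h.1 h.2
  · refine mem_of_le_of_separating (f := -f) (u := -u) hconv hD.isCompact.isClosed
      (Set.union_comm C D ▸ hP) (fun y hy => ?_) hq' ?_ h.1 ?_
    · exact neg_le_neg (hfC y hy)
    · exact neg_lt_neg hqu'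
    · exact neg_le_neg h.2

/-- Along an edge of `Δ(k,n)`, a cell without new vertices contains no point beyond a vertex
of the edge that it misses. -/
theorem eq_indicatorVec_of_mem_segment {k : ℕ} {C : Set (Fin n → ℝ)} (hC : IsPolytope C)
    (hCP : C ⊆ hypersimplex k n)
    (hvC : Set.extremePoints ℝ C ⊆ Set.extremePoints ℝ (hypersimplex k n))
    {σ : Finset (Fin n)} (hσ : σ.card = k) {i j : Fin n} (hi : i ∈ σ) (hj : j ∉ σ)
    (hσC : indicatorVec (σ : Set (Fin n)) ∉ C) {x : Fin n → ℝ} (hx : x ∈ C)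
    (hxseg : x ∈ segment ℝ (indicatorVec (σ : Set (Fin n)))
      (indicatorVec ((insert j (σ.erase i) : Finset (Fin n)) : Set (Fin n)))) :
    x = indicatorVec ((insert j (σ.erase i) : Finset (Fin n)) : Set (Fin n)) := by
  set τ := insert j (σ.erase i) with hτ
  set F : Set (Fin n → ℝ) :=
    {y | y ∈ C ∧ (∀ l ∈ σ.erase i, y l = 1) ∧ ∀ l ∉ insert j σ, y l = 0} with hF
  have hface : IsFaceOf F C := by
    refine ⟨⟨fun y hy => hy.1, fun y hy z hz w hw hwseg => ?_⟩, ?_⟩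
    · refine ⟨hy, fun l hl => ?_, fun l hl => ?_⟩
      · exact ((isExtreme_coord_eq_one k l).left_mem_of_mem_openSegment (hCP hy) (hCP hz)
          ⟨hCP hw.1, hw.2.1 l hl⟩ hwseg).2
      · exact ((isExtreme_coord_eq_zero k l).left_mem_of_mem_openSegment (hCP hy) (hCP hz)
          ⟨hCP hw.1, hw.2.2 l hl⟩ hwseg).2
    · rintro y hy z hz a b ha hb hab
      refine ⟨hC.convex hy.1 hz.1 ha hb hab, fun l hl => ?_, fun l hl => ?_⟩
      · simp [hy.2.1 l hl, hz.2.1 l hl, hab]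
      · simp [hy.2.2 l hl, hz.2.2 l hl]
  have hxF : x ∈ F := by
    obtain ⟨a, b, ha, hb, hab, rfl⟩ := hxseg
    refine ⟨hx, fun l hl => ?_, fun l hl => ?_⟩
    · have h1 : l ∈ σ := Finset.mem_of_mem_erase hl
      have h2 : l ∈ τ := Finset.mem_insert_of_mem hl
      simp [indicatorVec, h1, h2, hab]
    · have h1 : l ∉ σ := fun h => hl (Finset.mem_insert_of_mem h)
      have h2 : l ∉ τ := fun h => hl (Finset.insert_subset_insert j (Finset.erase_subset i σ) h)
      simp [indicatorVec, h1, h2]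
  rw [hC.eq_convexHull_extremePoints] at hface
  have hvert : Set.extremePoints ℝ C ∩ F ⊆ {indicatorVec (τ : Set (Fin n))} := by
    rintro v ⟨hv, hvF⟩
    obtain ⟨υ, hυ, rfl⟩ := extremePoints_convexHull_subset (hvC hv)
    have h1 : σ.erase i ⊆ υ := fun l hl => by
      have := hvF.2.1 l hl
      by_contra h
      simp [indicatorVec, h] at this
    have h2 : υ ⊆ insert j σ := fun l hl => by
      by_contra h
      have := hvF.2.2 l h
      simp [indicatorVec, hl] at this
    by_cases hiυ : i ∈ υ
    · have h3 : σ ⊆ υ := by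
        rw [← Finset.insert_erase hi]
        exact Finset.insert_subset hiυ h1
      have h4 := Finset.eq_of_subset_of_card_le h3 (hυ.trans hσ.symm).le
      exact absurd hvF.1 (h4 ▸ hσC)
    · have h3 : υ ⊆ τ := by
        intro l hl
        have hli : l ≠ i := fun h => hiυ (h ▸ hl)
        rcases Finset.mem_insert.1 (h2 hl) with h | h
        · exact h ▸ Finset.mem_insert_self _ _
        · exact Finset.mem_insert_of_mem (Finset.mem_erase.2 ⟨hli, h⟩)
      have h4 := Finset.eq_of_subset_of_card_le h3
        (((card_insert_erase hi hj).trans hσ).trans hυ.symm).le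
      exact congrArg (fun s : Finset (Fin n) => indicatorVec (s : Set (Fin n))) h4
  rw [hface.eq_convexHull] at hxF
  simpa using convexHull_mono hvert hxF

theorem IsSplit.exists_isSplitDatum {k : ℕ} (hk : 0 < k) (hkn : k < n)
    {S : Set (Set (Fin n → ℝ))} (hS : IsSplit (hypersimplex k n) S) :
    ∃ A μ, IsSplitDatum k A μ ∧ S = hyperplaneSplit k A μ := by
  obtain ⟨C, D, hC, hD, hCD, hDC, hP, hSeq⟩ := hS.exists_eq_facesOfPair
  obtain ⟨f, u, hfC, hfD, hlt, hgt⟩ := exists_separating_hypersimplex hk hkn (hS.1.poly C hC)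
    (hS.1.poly D hD) hP hCD hDC (hS.1.inter_face C hC D hD).1
  set a : Fin n → ℝ := fun i => f (Pi.single i 1) with ha
  have hfa : ∀ x, f x = ∑ i, x i * a i := by
    intro x
    have := LinearMap.pi_apply_eq_sum_univ (f : (Fin n → ℝ) →ₗ[ℝ] ℝ) x
    simp only [ContinuousLinearMap.coe_coe, smul_eq_mul] at this
    rw [this]
    refine Finset.sum_congr rfl fun i _ => ?_
    rw [ha]
    congr 2
    ext j
    simp [Pi.single_apply, eq_comm]
  have hfσ : ∀ σ : Finset (Fin n), f (indicatorVec (σ : Set (Fin n))) = ∑ l ∈ σ, a l := by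
    intro σ
    simp [hfa, indicatorVec]
  have hmemP : ∀ σ : Finset (Fin n), σ.card = k →
      indicatorVec (σ : Set (Fin n)) ∈ hypersimplex k n :=
    fun σ hσ => subset_convexHull ℝ _ ⟨σ, hσ, rfl⟩
  have hpos : ∃ σ : Finset (Fin n), σ.card = k ∧ u < ∑ l ∈ σ, a l := by
    by_contra! h
    obtain ⟨x, hx, hxu⟩ := hgt
    have hsub : hypersimplex k n ⊆ {x | f x ≤ u} :=
      convexHull_min (by rintro _ ⟨σ, hσ, rfl⟩; exact (hfσ σ).trans_le (h σ hσ))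
        (convex_halfSpace_le f.isLinear u)
    exact absurd (hsub hx) (not_le.2 hxu)
  have hneg : ∃ σ : Finset (Fin n), σ.card = k ∧ ∑ l ∈ σ, a l < u := by
    by_contra! h
    obtain ⟨x, hx, hxu⟩ := hlt
    have hsub : hypersimplex k n ⊆ {x | u ≤ f x} :=
      convexHull_min (by rintro _ ⟨σ, hσ, rfl⟩; exact (h σ hσ).trans_eq (hfσ σ).symm)
        (convex_halfSpace_ge f.isLinear u)
    exact absurd (hsub hx) (not_le.2 hxu)
  have hadj : ∀ σ : Finset (Fin n), σ.card = k → ∀ i ∈ σ, ∀ j ∉ σ,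
      u < ∑ l ∈ σ, a l → u ≤ ∑ l ∈ insert j (σ.erase i), a l := by
    intro σ hσ i hi j hj hσu
    by_contra! hτu
    have hτ := (card_insert_erase hi hj).trans hσ
    rw [← hfσ] at hσu hτu
    set τ := insert j (σ.erase i)
    set t : ℝ := (f (indicatorVec (σ : Set (Fin n))) - u) /
      (f (indicatorVec (σ : Set (Fin n))) - f (indicatorVec (τ : Set (Fin n)))) with ht
    have hden : 0 < f (indicatorVec (σ : Set (Fin n))) - f (indicatorVec (τ : Set (Fin n))) := by
      linarith
    have ht0 : 0 ≤ t := div_nonneg (by linarith) hden.le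
    have ht1 : t ≤ 1 := (div_le_one hden).2 (by linarith)
    have htm : t * (f (indicatorVec (σ : Set (Fin n))) - f (indicatorVec (τ : Set (Fin n)))) =
      f (indicatorVec (σ : Set (Fin n))) - u := div_mul_cancel₀ _ hden.ne'
    set x := (1 - t) • indicatorVec (σ : Set (Fin n)) + t • indicatorVec (τ : Set (Fin n)) with hx
    have hxseg : x ∈ segment ℝ (indicatorVec (σ : Set (Fin n))) (indicatorVec (τ : Set (Fin n))) :=
      ⟨1 - t, t, by linarith, ht0, by ring, rfl⟩
    have hxP : x ∈ hypersimplex k n :=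
      (convex_convexHull ℝ _).segment_subset (hmemP σ hσ) (hmemP τ hτ) hxseg
    have hxu : f x = u := by
      rw [hx, map_add, map_smul, map_smul, smul_eq_mul, smul_eq_mul]
      linarith
    have hxτ := eq_indicatorVec_of_mem_segment (hS.1.poly C hC) (fun y hy => ((hfC y).1 hy).1)
      (hS.1.vertices C hC) hσ hi hj (fun h => by linarith [((hfC _).1 h).2])
      ((hfC x).2 ⟨hxP, hxu.le⟩) hxseg
    rw [← hxu, hxτ] at hτu
    exact lt_irrefl _ hτu
  obtain ⟨α, β, A, μ, hβα, haA, hdatum, hu⟩ := exists_two_values hadj hpos hneg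
  have hfA : ∀ x ∈ hypersimplex k n, f x = β * k + (α - β) * ∑ i ∈ A, x i := by
    intro x hx
    have h1 : ∀ i, x i * a i = β * x i + (α - β) * if i ∈ A then x i else 0 := by
      intro i
      rw [haA i]
      split_ifs <;> ring
    rw [hfa, Finset.sum_congr rfl fun i _ => h1 i, Finset.sum_add_distrib, ← Finset.mul_sum,
      ← Finset.mul_sum, (mem_hypersimplex.1 hx).2, Finset.sum_ite_mem, Finset.univ_inter]
  have hβα' : 0 < α - β := sub_pos.2 hβα
  have hslab := hypersimplex_eq_slab k A
  refine ⟨A, μ, hdatum, ?_⟩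
  rw [hSeq, hyperplaneSplit]
  congr 1
  · ext x
    rw [hfC]
    constructor
    · rintro ⟨hx, hxu⟩
      rw [hfA x hx, hu, add_le_add_iff_left, mul_le_mul_iff_right₀ hβα'] at hxu
      rw [hslab] at hx
      exact ⟨hx.1, hx.2.1, hx.2.2.1, hxu⟩
    · intro hx
      have hx' : x ∈ hypersimplex k n := mem_hypersimplex.2 ⟨hx.1, hx.2.1⟩
      rw [hfA x hx', hu, add_le_add_iff_left, mul_le_mul_iff_right₀ hβα']
      exact ⟨hx', hx.2.2.2⟩
  · ext x
    rw [hfD]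
    constructor
    · rintro ⟨hx, hxu⟩
      rw [hfA x hx, hu, add_le_add_iff_left, mul_le_mul_iff_right₀ hβα'] at hxu
      rw [hslab] at hx
      exact ⟨hx.1, hx.2.1, hxu, hx.2.2.2⟩
    · intro hx
      have hx' : x ∈ hypersimplex k n := mem_hypersimplex.2 ⟨hx.1, hx.2.1⟩
      rw [hfA x hx', hu, add_le_add_iff_left, mul_le_mul_iff_right₀ hβα']
      exact ⟨hx', hx.2.2.1⟩

end SplitsOfHypersimplex

section Counting

variable {n : ℕ}

theorem IsSplitDatum.slab_eq_of_hyperplaneSplit_eq {k : ℕ} {A A' : Finset (Fin n)} {μ μ' : ℕ}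
    (h : IsSplitDatum k A μ) (h' : IsSplitDatum k A' μ')
    (heq : hyperplaneSplit k A μ = hyperplaneSplit k A' μ') :
    slab k A μ μ = slab k A' μ' μ' := by
  have h1 := setOf_maximalCell_facesOfPair (isPolytope_slab k A 0 μ) (isPolytope_slab k A μ k)
    h.not_subset h.not_subset'
  have h2 := setOf_maximalCell_facesOfPair (isPolytope_slab k A' 0 μ') (isPolytope_slab k A' μ' k)
    h'.not_subset h'.not_subset'
  rw [hyperplaneSplit, hyperplaneSplit] at heq
  rw [heq, h2] at h1
  rw [← slab_inter A h.2.1.le, ← slab_inter A' h'.2.1.le]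
  rcases Set.pair_eq_pair_iff.1 h1 with ⟨e1, e2⟩ | ⟨e1, e2⟩
  · rw [e1, e2]
  · rw [e1, e2, Set.inter_comm]

theorem card_insert_erase_inter {σ : Finset (Fin n)} {i j : Fin n} (hi : i ∈ σ) (hj : j ∉ σ)
    (A : Finset (Fin n)) : ((insert j (σ.erase i) ∩ A).card : ℝ) =
      (σ ∩ A).card - (if i ∈ A then 1 else 0) + if j ∈ A then 1 else 0 := by
  simpa [Finset.sum_ite_mem] using sum_insert_erase hi hj fun l => if l ∈ A then (1 : ℝ) else 0

theorem IsSplitDatum.mem_iff_mem_of_slab_eq {k : ℕ} {A A' : Finset (Fin n)} {μ μ' : ℕ}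
    (h : IsSplitDatum k A μ) (heq : slab k A μ μ = slab k A' μ' μ') {i j : Fin n} (hi : i ∈ A)
    (hj : j ∈ A) : i ∈ A' ↔ j ∈ A' := by
  obtain rfl | hij := eq_or_ne i j
  · rfl
  obtain ⟨h1, h2, h3, h4⟩ := h
  obtain ⟨s, his, hsA, hs⟩ := Finset.exists_subsuperset_card_eq (s := {i}) (t := A.erase j)
    (n := μ) (by simpa using ⟨hij, hi⟩) (by simpa using h1)
    (by rw [Finset.card_erase_of_mem hj]; omega)
  obtain ⟨σ, hσ, hσA⟩ := exists_inter_eq (hsA.trans (Finset.erase_subset j A)) (q := k - μ)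
    (by omega)
  have hiσ : i ∈ σ := by
    have : i ∈ σ ∩ A := hσA ▸ his (Finset.mem_singleton_self i)
    exact (Finset.mem_inter.1 this).1
  have hjσ : j ∉ σ := fun hjσ => by
    have : j ∈ s := hσA ▸ Finset.mem_inter.2 ⟨hjσ, hj⟩
    exact Finset.notMem_erase j A (hsA this)
  have hσk : σ.card = k := by omega
  have hσμ : (σ ∩ A).card = μ := by rw [hσA, hs]
  have hτA := card_insert_erase_inter hiσ hjσ A
  have hτA' := card_insert_erase_inter hiσ hjσ A'
  have hτk := (card_insert_erase hiσ hjσ).trans hσk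
  set τ := insert j (σ.erase i)
  have hτμ : (τ ∩ A).card = μ := by
    simp only [hi, hj, if_true, hσμ, sub_add_cancel] at hτA
    exact_mod_cast hτA
  have m1 := (indicatorVec_mem_slab.1
    (heq ▸ indicatorVec_mem_slab.2 ⟨hσk, hσμ.ge, hσμ.le⟩)).2
  have m2 := (indicatorVec_mem_slab.1
    (heq ▸ indicatorVec_mem_slab.2 ⟨hτk, hτμ.ge, hτμ.le⟩)).2
  rw [le_antisymm m1.2 m1.1, le_antisymm m2.2 m2.1] at hτA'
  by_cases hiA : i ∈ A' <;> by_cases hjA : j ∈ A' <;> simp [hiA, hjA] at hτA' ⊢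
  linarith

theorem IsSplitDatum.eq_of_hyperplaneSplit_eq {k : ℕ} {A A' : Finset (Fin n)} {μ μ' : ℕ}
    (h : IsSplitDatum k A μ) (h' : IsSplitDatum k A' μ') {i : Fin n} (hi : i ∈ A) (hi' : i ∈ A')
    (heq : hyperplaneSplit k A μ = hyperplaneSplit k A' μ') : A = A' ∧ μ = μ' := by
  have hslab := h.slab_eq_of_hyperplaneSplit_eq h' heq
  have hA : A = A' := subset_antisymm
    (fun j hj => (h.mem_iff_mem_of_slab_eq hslab hi hj).1 hi')
    fun j hj => (h'.mem_iff_mem_of_slab_eq hslab.symm hi' hj).1 hi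
  subst hA
  obtain ⟨h1, h2, h3, h4⟩ := h
  obtain ⟨σ, hσ, hσA⟩ := exists_card_inter_eq (A := A) (p := μ) (q := k - μ) h3.le (by omega)
  have := (indicatorVec_mem_slab.1
    (hslab ▸ indicatorVec_mem_slab (σ := σ).2 ⟨by omega, hσA.ge, hσA.le⟩)).2
  exact ⟨rfl, by omega⟩

/-- The finite set of pairs `(A, μ)` with `IsSplitDatum k A μ`. -/
noncomputable def splitData (k n : ℕ) : Finset (Finset (Fin n) × ℕ) :=
  (Finset.univ ×ˢ Finset.Ico 1 k).filter fun p => IsSplitDatum k p.1 p.2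

theorem mem_splitData {k : ℕ} {p : Finset (Fin n) × ℕ} :
    p ∈ splitData k n ↔ IsSplitDatum k p.1 p.2 := by
  simp only [splitData, Finset.mem_filter, Finset.mem_product, Finset.mem_univ, true_and,
    Finset.mem_Ico, and_iff_right_iff_imp]
  exact fun h => ⟨h.1, h.2.1⟩

theorem ncard_isSplit {k : ℕ} (hk : 0 < k) (hkn : k < n) (i : Fin n) :
    {S : Set (Set (Fin n → ℝ)) | IsSplit (hypersimplex k n) S}.ncard =
      ((splitData k n).filter fun p => i ∈ p.1).card := by
  rw [← Set.ncard_coe_finset]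
  symm
  refine Set.ncard_congr (fun p _ => hyperplaneSplit k p.1 p.2) (fun p hp => ?_)
    (fun p q hp hq heq => ?_) fun S hS => ?_
  · exact (mem_splitData.1 (Finset.mem_filter.1 hp).1).isSplit
  · obtain ⟨hp, hip⟩ := Finset.mem_filter.1 hp
    obtain ⟨hq, hiq⟩ := Finset.mem_filter.1 hq
    have := (mem_splitData.1 hp).eq_of_hyperplaneSplit_eq (mem_splitData.1 hq) hip hiq heq
    exact Prod.ext this.1 this.2
  · obtain ⟨A, μ, h, rfl⟩ := IsSplit.exists_isSplitDatum hk hkn hS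
    by_cases hi : i ∈ A
    · exact ⟨(A, μ), Finset.mem_filter.2 ⟨mem_splitData.2 h, hi⟩, rfl⟩
    · exact ⟨(Aᶜ, k - μ), Finset.mem_filter.2 ⟨mem_splitData.2 h.compl, Finset.mem_compl.2 hi⟩,
        hyperplaneSplit_compl A h.2.1.le⟩

theorem two_mul_card_filter_splitData (k : ℕ) (i : Fin n) :
    2 * ((splitData k n).filter fun p => i ∈ p.1).card = (splitData k n).card := by
  rw [← Finset.card_filter_add_card_filter_not (s := splitData k n) fun p => i ∈ p.1, two_mul,
    add_right_inj]
  refine Finset.card_nbij' (fun p => (p.1ᶜ, k - p.2)) (fun p => (p.1ᶜ, k - p.2))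
    (fun p hp => ?_) (fun p hp => ?_) (fun p hp => ?_) fun p hp => ?_
  all_goals
    simp only [Finset.mem_coe, Finset.mem_filter, mem_splitData] at hp ⊢
  · exact ⟨hp.1.compl, by simpa using hp.2⟩
  · exact ⟨hp.1.compl, by simpa using hp.2⟩
  all_goals
    exact Prod.ext (compl_compl _) (Nat.sub_sub_self hp.1.2.1.le)

/-- The number of subsets of `[n]` with at most `m` elements. -/
theorem card_filter_card_le (n m : ℕ) :
    (Finset.univ.filter fun A : Finset (Fin n) => A.card ≤ m).card =
      ∑ j ∈ Finset.range (m + 1), n.choose j := by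
  rw [Finset.card_eq_sum_card_fiberwise (f := Finset.card) (t := Finset.range (m + 1))
    fun A hA => by simpa [Nat.lt_succ_iff] using hA]
  refine Finset.sum_congr rfl fun j hj => ?_
  have hj' : j ≤ m := Nat.lt_succ_iff.1 (Finset.mem_range.1 hj)
  have hcard := Finset.card_powersetCard j (Finset.univ : Finset (Fin n))
  rw [Finset.card_univ, Fintype.card_fin] at hcard
  rw [Finset.filter_filter, ← hcard]
  congr 1
  ext A
  simp only [Finset.mem_filter, Finset.mem_univ, true_and, Finset.mem_powersetCard,
    Finset.subset_univ]
  exact ⟨fun h => h.2, fun h => ⟨h ▸ hj', h⟩⟩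

theorem card_filter_card_compl_le (n m : ℕ) :
    (Finset.univ.filter fun A : Finset (Fin n) => Aᶜ.card ≤ m).card =
      ∑ j ∈ Finset.range (m + 1), n.choose j := by
  rw [← card_filter_card_le]
  exact Finset.card_nbij' compl compl (fun A hA => by simpa using hA)
    (fun A hA => by simpa using hA) (fun A _ => compl_compl A) fun A _ => compl_compl A

theorem card_filter_isSplitDatum {k μ : ℕ} (hkn : k < n) (hμ : μ ∈ Finset.Ico 1 k) :
    (Finset.univ.filter fun A : Finset (Fin n) => IsSplitDatum k A μ).card +
      (∑ j ∈ Finset.range (μ + 1), n.choose j + ∑ j ∈ Finset.range (k - μ + 1), n.choose j) =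
        2 ^ n := by
  obtain ⟨h1, h2⟩ := Finset.mem_Ico.1 hμ
  have hcard : ∀ A : Finset (Fin n), A.card + Aᶜ.card = n := fun A => by
    rw [Finset.card_add_card_compl, Fintype.card_fin]
  rw [← card_filter_card_le, ← card_filter_card_compl_le, ← Finset.card_union_of_disjoint,
    ← Finset.card_union_of_disjoint]
  · have huniv : (Finset.univ : Finset (Finset (Fin n))).card = 2 ^ n := by
      rw [Finset.card_univ, Fintype.card_finset, Fintype.card_fin]
    rw [← huniv]
    congr 1
    ext A
    have := hcard A
    simp only [Finset.mem_union, Finset.mem_filter, Finset.mem_univ, true_and, iff_true]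
    rw [IsSplitDatum]
    omega
  · refine Finset.disjoint_left.2 fun A hA hA' => ?_
    simp only [Finset.mem_union, Finset.mem_filter, Finset.mem_univ, true_and] at hA hA'
    obtain ⟨-, -, h3, h4⟩ := hA
    omega
  · refine Finset.disjoint_left.2 fun A hA hA' => ?_
    have := hcard A
    simp only [Finset.mem_filter, Finset.mem_univ, true_and] at hA hA'
    omega

theorem card_splitData_add {k : ℕ} (hkn : k < n) :
    (splitData k n).card + 2 * ∑ μ ∈ Finset.Ico 1 k, ∑ j ∈ Finset.range (μ + 1), n.choose j =
      (k - 1) * 2 ^ n := by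
  have hrefl : ∑ μ ∈ Finset.Ico 1 k, ∑ j ∈ Finset.range (k - μ + 1), n.choose j =
      ∑ μ ∈ Finset.Ico 1 k, ∑ j ∈ Finset.range (μ + 1), n.choose j := by
    refine Finset.sum_nbij' (fun μ => k - μ) (fun μ => k - μ) ?_ ?_ ?_ ?_ fun _ _ => rfl
    all_goals
      intro μ hμ
      rw [Finset.mem_Ico] at *
      omega
  have hcard : (splitData k n).card = ∑ μ ∈ Finset.Ico 1 k,
      (Finset.univ.filter fun A : Finset (Fin n) => IsSplitDatum k A μ).card := by
    rw [splitData, Finset.card_filter, Finset.sum_product_right]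
    simp only [Finset.card_filter]
  rw [hcard, two_mul]
  nth_rewrite 2 [← hrefl]
  rw [← Finset.sum_add_distrib, ← Finset.sum_add_distrib,
    Finset.sum_congr rfl fun μ hμ => card_filter_isSplitDatum hkn hμ]
  simp

theorem sum_range_choose_eq (n k : ℕ) :
    ∑ j ∈ Finset.range (k + 2), n.choose j = n + 1 + ∑ j ∈ Finset.Icc 2 (k + 1), n.choose j := by
  induction k with
  | zero => simp [Finset.sum_range_succ, add_comm]
  | succ k ih =>
    rw [Finset.sum_range_succ, ih, Finset.sum_Icc_succ_top (b := k + 1) (by omega), add_assoc]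

theorem sum_sum_range_choose_eq (n k : ℕ) :
    ((∑ μ ∈ Finset.Ico 1 (k + 1), ∑ j ∈ Finset.range (μ + 1), n.choose j : ℕ) : ℤ) =
      k * (n + 1) + ∑ i ∈ Finset.Icc 2 k, ((k : ℤ) + 1 - i) * n.choose i := by
  induction k with
  | zero => simp
  | succ k ih =>
    have hsum : ∑ i ∈ Finset.Icc 2 (k + 1), ((k : ℤ) + 1 - i) * n.choose i =
        ∑ i ∈ Finset.Icc 2 k, ((k : ℤ) + 1 - i) * n.choose i := by
      rcases k with _ | k
      · simp
      · rw [Finset.sum_Icc_succ_top (by omega)]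
        simp
    have hsplit : ∑ i ∈ Finset.Icc 2 (k + 1), (((k + 1 : ℕ) : ℤ) + 1 - i) * n.choose i =
        ∑ i ∈ Finset.Icc 2 (k + 1), ((k : ℤ) + 1 - i) * n.choose i +
          ∑ i ∈ Finset.Icc 2 (k + 1), (n.choose i : ℤ) := by
      rw [← Finset.sum_add_distrib]
      refine Finset.sum_congr rfl fun i _ => ?_
      push_cast
      ring
    rw [Finset.sum_Ico_succ_top (by omega), Nat.cast_add, ih, sum_range_choose_eq, hsplit, hsum]
    push_cast
    ring

end Counting

/-- For `n ≥ 2k`, the number of splits of the hypersimplex `Δ(k,n)` equals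
`(k−1)(2^{n−1} − (n+1)) − Σ_{i=2}^{k−1} (k−i)·C(n,i)`. -/
theorem card_splits_hypersimplex (k n : ℕ) (hk : 0 < k) (hn : 2 * k ≤ n) (hkn : k < n) :
    ({S : Set (Set (Fin n → ℝ)) | IsSplit (hypersimplex k n) S}.ncard : ℤ) =
      ((k : ℤ) - 1) * (2 ^ (n - 1) - ((n : ℤ) + 1)) -
        ∑ i ∈ Finset.Icc 2 (k - 1), ((k : ℤ) - (i : ℤ)) * (n.choose i : ℤ) := by
  obtain ⟨k, rfl⟩ := Nat.exists_eq_add_one.2 hk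
  obtain ⟨n, rfl⟩ := Nat.exists_eq_add_one.2 (hk.trans hkn)
  have h1 := ncard_isSplit hk hkn 0
  have h2 := two_mul_card_filter_splitData (k + 1) (0 : Fin (n + 1))
  have h3 := card_splitData_add hkn
  have h4 := sum_sum_range_choose_eq (n + 1) k
  rw [← h1] at h2
  rw [← h2, ← mul_add, Nat.add_sub_cancel, pow_succ', mul_left_comm] at h3
  have h5 := congrArg (Nat.cast : ℕ → ℤ) (mul_left_cancel₀ two_ne_zero h3)
  rw [Nat.cast_add, h4] at h5
  push_cast at h5 ⊢
  simp only [add_sub_cancel_right]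
  linarith
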